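/- arXiv:1202.4539 — 3 statements merged into one kernel-verified Lean document; each statement's English description precedes it below -/
import Mathlib

section
/- For Lebesgue-almost every pair (θ_1, θ_2) ∈ ℝ² the following holds: for every pair (η_1, η_2) ∈ ℝ², liminf_{q → ∞, q ∈ ℤ_{>0}} q · ‖qθ_1 − η_1‖ · ‖qθ_2 − η_2‖ = 0. -/
open Filter MeasureTheory

/-- Distance from a real number to the nearest integer. -/
noncomputable def nint (x : ℝ) : ℝ := |x - round x|

/-
The product of `q`, `q θ₁ - η₁ - p₁` and `q θ₂ - η₂ - p₂` is the product of the coordinates of a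
point of a translate (grid) of the lattice spanned by the columns of `approxMatrix θ`. This
product is invariant under diagonal matrices of determinant one. Call a lattice good if each of
its grids contains points whose coordinates have small product and whose first coordinate is
large. As the grids of a lattice form a compact torus, goodness is essentially an open condition,
so it suffices to find one good lattice that is approached by the diagonal orbit of `approxMatrix
θ` for almost every `θ`.

The candidates lie near an order `R` in the cyclic cubic field `ℚ(cos (2π/7))`. The unit group of
`R` has rank two, hence, as in the theorems of Furstenberg and Berend, a proper closed subset of
the torus `ℝ³ / R` which is invariant under the units is finite. The bad grids of `R` form such a
set. Applying units to a bad grid of a sheared lattice shows that it is one of these finitely many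
grids, and a generic shear makes each of them good. The shear can moreover be taken along a vector
of `R`, so that the sheared lattice contains a vector on the third coordinate axis. An open set of
such lattices meets the orbit of almost every `θ`, by Lebesgue density and the approximation of
`θ₁` by rationals.
-/

open Topology Pointwise Matrix

namespace Littlewood

section CongruenceUnits

variable {ι : Type*}

/-- The totally positive units of a ring `R` in `ℝ ^ ι` which are congruent to `1` modulo `t`.
The ring is thought of as an order in a totally real number field, embedded by its real places. -/
structure IsCongrUnit (R : Subring (ι → ℝ)) (t : ℕ) (p : ι → ℝ) : Prop where
  pos : ∀ i, 0 < p i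
  inv_mem : p⁻¹ ∈ R
  cong : ∃ w ∈ R, p = 1 + t * w

namespace IsCongrUnit

variable {R : Subring (ι → ℝ)} {t : ℕ} {p q : ι → ℝ}

theorem mem (hp : IsCongrUnit R t p) : p ∈ R := by
  obtain ⟨w, hw, rfl⟩ := hp.cong
  exact R.add_mem R.one_mem (R.mul_mem (natCast_mem R t) hw)

theorem of_mem (hpos : ∀ i, 0 < p i) (hp : p ∈ R) (hinv : p⁻¹ ∈ R) : IsCongrUnit R 1 p :=
  ⟨hpos, hinv, p - 1, R.sub_mem hp R.one_mem, by simp⟩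

theorem to_one (hp : IsCongrUnit R t p) : IsCongrUnit R 1 p := of_mem hp.pos hp.mem hp.inv_mem

theorem mul_inv_cancel (hp : IsCongrUnit R t p) : p * p⁻¹ = 1 :=
  funext fun i => mul_inv_cancel₀ (hp.pos i).ne'

theorem one (R : Subring (ι → ℝ)) (t : ℕ) : IsCongrUnit R t 1 :=
  ⟨fun _ => one_pos, by simp, 0, R.zero_mem, by simp⟩

theorem mul (hp : IsCongrUnit R t p) (hq : IsCongrUnit R t q) : IsCongrUnit R t (p * q) where
  pos i := mul_pos (hp.pos i) (hq.pos i)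
  inv_mem := by rw [mul_inv]; exact R.mul_mem hp.inv_mem hq.inv_mem
  cong := by
    obtain ⟨v, hv, rfl⟩ := hp.cong
    obtain ⟨w, hw, hq'⟩ := hq.cong
    exact ⟨v * q + w, R.add_mem (R.mul_mem hv hq.mem) hw, by linear_combination hq'⟩

theorem inv (hp : IsCongrUnit R t p) : IsCongrUnit R t p⁻¹ where
  pos i := inv_pos.2 (hp.pos i)
  inv_mem := by rw [inv_inv]; exact hp.mem
  cong := by
    obtain ⟨w, hw, hpw⟩ := hp.cong
    refine ⟨-(w * p⁻¹), R.neg_mem (R.mul_mem hw hp.inv_mem), ?_⟩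
    linear_combination hp.mul_inv_cancel - p⁻¹ * hpw

theorem pow (hp : IsCongrUnit R t p) (n : ℕ) : IsCongrUnit R t (p ^ n) := by
  induction n with
  | zero => simpa using one R t
  | succ n ih => rw [pow_succ]; exact ih.mul hp

theorem zpow (hp : IsCongrUnit R t p) (n : ℤ) : IsCongrUnit R t (p ^ n) := by
  cases n with
  | ofNat n => simpa using hp.pow n
  | negSucc n => rw [zpow_negSucc]; exact (hp.pow _).inv

end IsCongrUnit

end CongruenceUnits

section RealOrder

variable {ι : Type*} [Fintype ι]

/-- The properties of an order in a totally real number field, embedded in `ℝ ^ ι` by its real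
places, on which the argument rests: it is a cocompact lattice, nonzero elements have norm at
least one, and, as in Dirichlet's unit theorem, each coordinate is expanded by a unit which
contracts all the others. -/
structure IsRealOrder (R : Subring (ι → ℝ)) : Prop where
  exists_norm_sub_le : ∃ C, ∀ v : ι → ℝ, ∃ w ∈ R, ‖v - w‖ ≤ C
  one_le_abs_prod : ∀ v ∈ R, v ≠ 0 → 1 ≤ |∏ i, v i|
  exists_unit : ∀ i, ∃ p, IsCongrUnit R 1 p ∧ 1 < p i ∧ ∀ j ≠ i, p j < 1

variable {R : Subring (ι → ℝ)} {t : ℕ} {v w p : ι → ℝ}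

namespace IsRealOrder

theorem apply_ne_zero (hR : IsRealOrder R) (hv : v ∈ R) (hv0 : v ≠ 0) (i : ι) : v i ≠ 0 := by
  intro hi
  have := hR.one_le_abs_prod v hv hv0
  rw [Finset.prod_eq_zero (Finset.mem_univ i) hi, abs_zero] at this
  exact absurd this zero_lt_one.not_ge

theorem eq_of_apply_eq (hR : IsRealOrder R) (hv : v ∈ R) (hw : w ∈ R) {i : ι}
    (h : v i = w i) : v = w := by
  by_contra hne
  exact hR.apply_ne_zero (R.sub_mem hv hw) (sub_ne_zero.2 hne) i (sub_eq_zero.2 h)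

theorem prod_eq_one (hR : IsRealOrder R) [Nonempty ι] (hp : IsCongrUnit R t p) :
    ∏ i, p i = 1 := by
  have one_le : ∀ {q}, IsCongrUnit R t q → 1 ≤ ∏ i, q i := fun {q} hq => by
    have hpos : 0 < ∏ i, q i := Finset.prod_pos fun i _ => hq.pos i
    have hq0 : q ≠ 0 := fun h => (hq.pos (Classical.arbitrary ι)).ne' (congrFun h _)
    simpa [abs_of_pos hpos] using hR.one_le_abs_prod q hq.mem hq0
  refine le_antisymm ?_ (one_le hp)
  have h := one_le hp.inv
  simp only [Pi.inv_apply, Finset.prod_inv_distrib] at h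
  exact (one_le_inv₀ (Finset.prod_pos fun i _ => hp.pos i)).1 h

theorem one_le_norm (hR : IsRealOrder R) (hv : v ∈ R) (hv0 : v ≠ 0) : 1 ≤ ‖v‖ := by
  by_contra! hlt
  have hle : ∏ i, |v i| ≤ ‖v‖ ^ Fintype.card ι :=
    (Finset.prod_le_prod (fun i _ => abs_nonneg (v i)) fun i _ => norm_le_pi_norm v i).trans_eq
      (Finset.prod_const _)
  have hι : Nonempty ι := not_isEmpty_iff.1 fun _ => hv0 (Subsingleton.elim _ _)
  have hprod := hR.one_le_abs_prod v hv hv0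
  rw [Finset.abs_prod] at hprod
  exact (hprod.trans hle).not_gt (pow_lt_one₀ (norm_nonneg v) hlt Fintype.card_ne_zero)

theorem finite_inter_of_isBounded (hR : IsRealOrder R) {K : Set (ι → ℝ)}
    (hK : Bornology.IsBounded K) : (K ∩ R).Finite := by
  have hdisc : DiscreteTopology R.toAddSubgroup :=
    DiscreteTopology.of_forall_le_dist one_pos fun v w hne => by
      change 1 ≤ dist (v : ι → ℝ) w
      rw [dist_eq_norm]
      exact hR.one_le_norm (R.sub_mem v.2 w.2) (sub_ne_zero.2 (Subtype.coe_injective.ne hne))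
  exact Metric.finite_isBounded_inter_isClosed ⟨hdisc⟩ hK
    (AddSubgroup.isClosed_of_discrete (H := R.toAddSubgroup))

theorem exists_lt_sub_eq_mul (hR : IsRealOrder R) {a : ι → ℝ} (ha : ∀ i, a i ≠ 0)
    (ha' : a ∈ R) (f : ℕ → R) : ∃ i j, i < j ∧ ∃ w ∈ R, (f j - f i : ι → ℝ) = a * w := by
  obtain ⟨C, hC⟩ := hR.exists_norm_sub_le
  choose w hw hwC using fun k => hC (a⁻¹ * f k)
  have key : ∀ k, a * (a⁻¹ * f k - w k) = f k - a * w k := fun k => by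
    have : a * a⁻¹ = 1 := funext fun i => mul_inv_cancel₀ (ha i)
    linear_combination (f k : ι → ℝ) * this
  have hmem : ∀ k, (f k - a * w k : ι → ℝ) ∈ Metric.closedBall 0 (‖a‖ * C) ∩ R := fun k => by
    refine ⟨?_, R.sub_mem (f k).2 (R.mul_mem ha' (hw k))⟩
    rw [mem_closedBall_zero_iff, ← key]
    exact (norm_mul_le _ _).trans (by gcongr; exact hwC k)
  obtain ⟨i, j, hij, heq⟩ := Set.Finite.exists_lt_map_eq_of_forall_mem hmem
    (hR.finite_inter_of_isBounded Metric.isBounded_closedBall)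
  exact ⟨i, j, hij, w j - w i, R.sub_mem (hw j) (hw i), by linear_combination -heq⟩

theorem exists_isCongrUnit_pow (hR : IsRealOrder R) (hp : IsCongrUnit R 1 p) (ht : t ≠ 0) :
    ∃ m : ℕ, m ≠ 0 ∧ IsCongrUnit R t (p ^ m) := by
  obtain ⟨i, j, hij, w, hw, hpw⟩ := hR.exists_lt_sub_eq_mul (a := t) (fun _ => by simpa)
    (natCast_mem R t) fun k => ⟨p ^ k, (hp.pow k).mem⟩
  obtain ⟨m, rfl⟩ := Nat.exists_eq_add_of_lt hij
  have hpi := hp.pow i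
  refine ⟨m + 1, m.succ_ne_zero, (hp.pow _).pos, (hp.pow _).inv_mem, (p ^ i)⁻¹ * w,
    R.mul_mem hpi.inv_mem hw, ?_⟩
  linear_combination (p ^ i)⁻¹ * hpw + (1 - p ^ (m + 1)) * hpi.mul_inv_cancel

theorem exists_mul_eq_natCast (hR : IsRealOrder R) (hv : v ∈ R) (hv0 : v ≠ 0) :
    ∃ m : ℕ, m ≠ 0 ∧ ∃ w ∈ R, v * w = m := by
  obtain ⟨i, j, hij, w, hw, h⟩ := hR.exists_lt_sub_eq_mul (hR.apply_ne_zero hv hv0) hv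
    fun k => ⟨k, natCast_mem R k⟩
  exact ⟨j - i, Nat.sub_ne_zero_of_lt hij, w, hw, by push_cast [hij.le]; exact h.symm⟩

theorem exists_unit_congr (hR : IsRealOrder R) (ht : t ≠ 0) (i : ι) :
    ∃ p, IsCongrUnit R t p ∧ 1 < p i ∧ ∀ j ≠ i, p j < 1 := by
  obtain ⟨p, hp, hpi, hpj⟩ := hR.exists_unit i
  obtain ⟨m, hm, hpm⟩ := hR.exists_isCongrUnit_pow hp ht
  exact ⟨p ^ m, hpm, one_lt_pow₀ hpi hm, fun j hj => pow_lt_one₀ (hp.pos j).le (hpj j hj) hm⟩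

theorem exists_unit_lt (hR : IsRealOrder R) (i : ι) {δ : ℝ} (hδ : 0 < δ) :
    ∃ p, IsCongrUnit R 1 p ∧ 1 < p i ∧ ∀ j ≠ i, p j < δ := by
  obtain ⟨p, hp, hpi, hpj⟩ := hR.exists_unit i
  have hev : ∀ᶠ n : ℕ in atTop, ∀ j, j ≠ i → p j ^ n < δ := by
    refine eventually_all.2 fun j => eventually_imp_distrib_left.2 fun hj => ?_
    exact (tendsto_pow_atTop_nhds_zero_of_lt_one (hp.pos j).le (hpj j hj)).eventually_lt_const hδ
  obtain ⟨n, hn, hn0⟩ := (hev.and (eventually_ne_atTop 0)).exists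
  exact ⟨p ^ n, hp.pow n, one_lt_pow₀ hpi hn0, hn⟩

theorem exists_unit_apply_mem_Ioc (hR : IsRealOrder R) {f : ι → ℝ} (hf : IsCongrUnit R 1 f) {l : ι}
    (hfl : f l < 1) {δ : ℝ} (hδ : 0 < δ) :
    ∃ u, IsCongrUnit R 1 u ∧ u l ∈ Set.Ioc 1 (f l)⁻¹ ∧ ∀ k ≠ l, f k ≤ 1 → u k ≤ δ := by
  obtain ⟨e, he, hel, hek⟩ := hR.exists_unit_lt l hδ
  have hy : 1 < (f l)⁻¹ := (one_lt_inv₀ (hf.pos l)).2 hfl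
  obtain ⟨b, hb, hb'⟩ := exists_mem_Ioc_zpow (he.pos l) hy
  have hb0 : 0 ≤ b := by
    have := (one_lt_zpow_iff_right₀ hy).1 (hel.trans_le hb')
    omega
  lift b to ℕ using hb0
  rw [zpow_natCast] at hb
  rw [zpow_add_one₀ (by positivity), zpow_natCast] at hb'
  have hul : (e * f ^ b) l = e l / (f l)⁻¹ ^ b := by simp
  refine ⟨e * f ^ b, he.mul (hf.pow b), ⟨?_, ?_⟩, fun k hk hfk => ?_⟩
  · rwa [hul, one_lt_div (by positivity)]
  · rwa [hul, div_le_iff₀ (by positivity), mul_comm]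
  · exact (mul_le_of_le_one_right (he.pos k).le (pow_le_one₀ (hf.pos k).le hfk)).trans (hek k hk).le

theorem exists_mem_approx (hR : IsRealOrder R) (i : ι) {x : ℝ} (hx : x ≠ 0) (r : ι → ℝ) {δ : ℝ}
    (hδ : 0 < δ) : ∃ z ∈ R, (∀ j ≠ i, |z j - r j| < δ) ∧ 0 < x * (r i - z i) := by
  classical
  obtain ⟨C, hC⟩ := hR.exists_norm_sub_le
  have hC0 : 0 ≤ C := (norm_nonneg _).trans (hC 0).choose_spec.2
  obtain ⟨u, hu, -, huj⟩ := hR.exists_unit_lt i (div_pos hδ (by positivity : 0 < C + 1))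
  obtain ⟨z, hz, hzC⟩ := hC (u⁻¹ * r - Pi.single i (SignType.sign x * (C + 1)))
  have hzj := fun j => (norm_le_pi_norm _ j).trans hzC
  refine ⟨u * z, R.mul_mem hu.mem hz, fun j hj => ?_, ?_⟩
  · have h := hzj j
    simp only [Pi.sub_apply, Pi.mul_apply, Pi.inv_apply, Pi.single_eq_of_ne hj, sub_zero] at h
    have hpos := hu.pos j
    calc |(u * z) j - r j| = u j * ‖(u j)⁻¹ * r j - z j‖ := by
          rw [Real.norm_eq_abs, ← abs_of_pos hpos, ← abs_mul, abs_of_pos hpos, abs_sub_comm,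
            mul_sub, mul_inv_cancel_left₀ hpos.ne', Pi.mul_apply]
      _ ≤ u j * (C + 1) := by gcongr; linarith
      _ < δ := (lt_div_iff₀ (by positivity)).1 (huj j hj)
  · have h := hzj i
    simp only [Pi.sub_apply, Pi.mul_apply, Pi.inv_apply, Pi.single_eq_same] at h
    set d := (u i)⁻¹ * r i - SignType.sign x * (C + 1) - z i
    have hrz : x * (r i - (u * z) i) = u i * (|x| * (C + 1) + x * d) := by
      have := (hu.pos i).ne'
      rw [← self_mul_sign, Pi.mul_apply]
      simp only [d]
      field_simp
      ring
    have hxd : -(|x| * C) ≤ x * d := by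
      refine (neg_le_neg ?_).trans (neg_abs_le _)
      rw [abs_mul]; gcongr; exact h
    rw [hrz]
    exact mul_pos (hu.pos i) (by linarith [abs_pos.2 hx])

end IsRealOrder

/-- The logarithms of the `i`-th coordinates of the units congruent to `1` modulo `t`. -/
noncomputable def logUnits (R : Subring (ι → ℝ)) (t : ℕ) (i : ι) : AddSubgroup ℝ where
  carrier := {l | ∃ p, IsCongrUnit R t p ∧ Real.log (p i) = l}
  zero_mem' := ⟨1, .one R t, by simp⟩
  add_mem' := by
    rintro _ _ ⟨p, hp, rfl⟩ ⟨q, hq, rfl⟩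
    exact ⟨p * q, hp.mul hq, Real.log_mul (hp.pos i).ne' (hq.pos i).ne'⟩
  neg_mem' := by
    rintro _ ⟨p, hp, rfl⟩
    exact ⟨p⁻¹, hp.inv, Real.log_inv _⟩

namespace IsRealOrder

-- Units `p`, `q` expanding different coordinates are multiplicatively independent, as one sees
-- in a third coordinate, but two elements of a cyclic subgroup of `ℝ` are dependent.
theorem dense_logUnits (hR : IsRealOrder R) (hι : 2 < Fintype.card ι) (ht : t ≠ 0) (i : ι) :
    Dense (logUnits R t i : Set ℝ) := by
  refine (logUnits R t i).dense_or_cyclic.resolve_right fun ⟨g, hg⟩ => ?_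
  obtain ⟨j, k, hji, hki, hkj⟩ : ∃ j k, j ≠ i ∧ k ≠ i ∧ k ≠ j := by
    classical
    obtain ⟨j, hj⟩ := Fintype.exists_ne_of_one_lt_card (by omega) i
    obtain ⟨k, hk⟩ := Finset.exists_mem_notMem_of_card_lt_card (s := {i, j}) (t := Finset.univ)
      (by rw [Finset.card_pair hj.symm]; simpa using hι)
    simp only [Finset.mem_insert, Finset.mem_singleton, not_or] at hk
    exact ⟨j, k, hj, hk.2.1, hk.2.2⟩
  obtain ⟨p, hp, hpi, hp'⟩ := hR.exists_unit_congr ht i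
  obtain ⟨q, hq, -, hq'⟩ := hR.exists_unit_congr ht j
  have hpD : Real.log (p i) ∈ logUnits R t i := ⟨p, hp, rfl⟩
  have hqD : Real.log (q i) ∈ logUnits R t i := ⟨q, hq, rfl⟩
  rw [hg, AddSubgroup.mem_closure_singleton] at hpD hqD
  obtain ⟨a, ha⟩ := hpD
  obtain ⟨b, hb⟩ := hqD
  rw [zsmul_eq_mul] at ha hb
  have hlog : ∀ l, b * Real.log (p l) = a * Real.log (q l) := fun l => by
    have heq : p ^ b = q ^ a := by
      refine hR.eq_of_apply_eq (hp.zpow b).mem (hq.zpow a).mem (i := i) ?_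
      apply Real.log_injOn_pos ((hp.zpow b).pos i) ((hq.zpow a).pos i)
      simp only [Pi.pow_apply, Real.log_zpow, ← ha, ← hb]
      ring
    simpa only [Pi.pow_apply, Real.log_zpow] using congrArg Real.log (congrFun heq l)
  have hpi' := Real.log_pos hpi
  have hpk := Real.log_neg (hp.pos k) (hp' k hki)
  have hqi := Real.log_neg (hq.pos i) (hq' i hji.symm)
  have hqk := Real.log_neg (hq.pos k) (hq' k hkj)
  have hdet : 0 < Real.log (q i) * Real.log (p k) - Real.log (q k) * Real.log (p i) := by
    nlinarith [mul_pos_of_neg_of_neg hqi hpk, mul_neg_of_neg_of_pos hqk hpi']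
  have ha0 : (a : ℝ) = 0 := by
    refine (mul_eq_zero.1 (?_ : (a : ℝ) * _ = 0)).resolve_right hdet.ne'
    linear_combination Real.log (p i) * hlog k - Real.log (p k) * hlog i
  rw [← ha, ha0, zero_mul] at hpi'
  exact hpi'.false

theorem exists_unit_apply_near (hR : IsRealOrder R) (hι : 2 < Fintype.card ι) (ht : t ≠ 0)
    (i : ι) {x y δ : ℝ} (hxy : 0 < x * y) (hδ : 0 < δ) :
    ∃ p, IsCongrUnit R t p ∧ |p i * x - y| < δ := by
  have hx : x ≠ 0 := left_ne_zero_of_mul hxy.ne'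
  have hopen : IsOpen {l : ℝ | |Real.exp l * x - y| < δ} :=
    isOpen_lt (by fun_prop) continuous_const
  obtain ⟨_, ⟨p, hp, rfl⟩, hl⟩ := (hR.dense_logUnits hι ht i).exists_mem_open hopen
    ⟨Real.log (y / x), by
      have hyx : 0 < y / x := by
        rw [show y / x = x * y / x ^ 2 by field_simp]
        exact div_pos hxy (by positivity)
      simpa [Real.exp_log hyx, hx] using hδ⟩
  exact ⟨p, hp, by simpa [Real.exp_log (hp.pos i)] using hl⟩

end IsRealOrder

end RealOrder

section Invariant

variable {ι : Type*} {R : Subring (ι → ℝ)} {t : ℕ} {v w : ι → ℝ}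

/-- Closed sets which are periodic under `R` and stable under the units congruent to `1` modulo
`t`: the lifts of the closed invariant sets of the unit action on the torus `ℝ ^ ι / R`. -/
structure IsInvariant (R : Subring (ι → ℝ)) (t : ℕ) (E : Set (ι → ℝ)) : Prop where
  closed : IsClosed E
  add_mem : ∀ {v w}, v ∈ E → w ∈ R → v + w ∈ E
  mul_mem : ∀ {p v}, IsCongrUnit R t p → v ∈ E → p * v ∈ E

/-- The points of finite order in `ℝ ^ ι / R`. -/
def IsTorsionPoint (R : Subring (ι → ℝ)) (x : ι → ℝ) : Prop :=
  ∃ N : ℕ, N ≠ 0 ∧ (N : ι → ℝ) * x ∈ R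

namespace IsInvariant

variable {E B : Set (ι → ℝ)}

theorem sub_mem (hE : IsInvariant R t E) (hv : v ∈ E) (hw : w ∈ R) : v - w ∈ E := by
  rw [sub_eq_add_neg]; exact hE.add_mem hv (R.neg_mem hw)

theorem of_one (hE : IsInvariant R 1 E) (t : ℕ) : IsInvariant R t E :=
  ⟨hE.closed, hE.add_mem, fun hp => hE.mul_mem hp.to_one⟩

theorem inter (hE : IsInvariant R t E) (hB : IsInvariant R t B) : IsInvariant R t (E ∩ B) :=
  ⟨hE.closed.inter hB.closed, fun hv hw => ⟨hE.add_mem hv.1 hw, hB.add_mem hv.2 hw⟩,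
    fun hp hv => ⟨hE.mul_mem hp hv.1, hB.mul_mem hp hv.2⟩⟩

theorem preimage_add_right (hE : IsInvariant R t E) {τ : ι → ℝ} (hτ : t * τ ∈ R) :
    IsInvariant R t ((· + τ) ⁻¹' E) where
  closed := hE.closed.preimage (continuous_add_const τ)
  add_mem {v w} hv hw := by
    rw [Set.mem_preimage, add_right_comm]
    exact hE.add_mem hv hw
  mul_mem {p v} hp hv := by
    obtain ⟨w, hw, hpw⟩ := hp.cong
    have : p * v + τ = p * (v + τ) - w * (t * τ) := by linear_combination -τ * hpw
    rw [Set.mem_preimage, this]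
    exact hE.sub_mem (hE.mul_mem hp hv) (R.mul_mem hw hτ)

theorem derivedSet (hE : IsInvariant R t E) : IsInvariant R t (derivedSet E) where
  closed := isClosed_derivedSet E
  add_mem {v w} hv hw := by
    refine ((mem_derivedSet.1 hv).map (continuous_add_const w).continuousAt
      (add_left_injective w)).mono ?_
    rw [map_principal]
    exact principal_mono.2 (Set.image_subset_iff.2 fun x hx => hE.add_mem hx hw)
  mul_mem {p v} hp hv := by
    have hinj : Function.Injective (p * ·) := fun x y hxy => funext fun i =>
      mul_left_cancel₀ (hp.pos i).ne' (congrFun hxy i)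
    refine ((mem_derivedSet.1 hv).map (continuous_const_mul p).continuousAt hinj).mono ?_
    rw [map_principal]
    exact principal_mono.2 (Set.image_subset_iff.2 fun x hx => hE.mul_mem hp hx)

end IsInvariant

end Invariant

section RealOrder

variable {ι : Type*} [Fintype ι] {R : Subring (ι → ℝ)} {t : ℕ} {v w p : ι → ℝ}

theorem exists_pow_mul_norm_le_one {i : ι} (hp : ∀ j, 0 < p j) (hpi : 1 < p i)
    (hpj : ∀ j ≠ i, p j < 1) (hvi : v i ≠ 0) (hv : ‖v‖ ≤ 1) :
    ∃ k : ℕ, (p i)⁻¹ ≤ |(p ^ k * v) i| ∧ ‖p ^ k * v‖ ≤ 1 ∧ ∀ j ≠ i, |(p ^ k * v) j| ≤ ‖v‖ := by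
  have hvi' : 0 < |v i| := abs_pos.2 hvi
  have hvi1 : |v i| ≤ 1 := (norm_le_pi_norm v i).trans hv
  obtain ⟨k, hk, hk'⟩ := exists_nat_pow_near ((one_le_inv₀ hvi').2 hvi1) hpi
  have habs : ∀ j, |(p ^ k * v) j| = p j ^ k * |v j| := fun j => by
    rw [Pi.mul_apply, Pi.pow_apply, abs_mul, abs_of_pos (pow_pos (hp j) k)]
  have hle : ∀ j ≠ i, |(p ^ k * v) j| ≤ ‖v‖ := fun j hj => by
    rw [habs]
    exact (mul_le_of_le_one_left (abs_nonneg _) (pow_le_one₀ (hp j).le (hpj j hj).le)).trans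
      (norm_le_pi_norm v j)
  refine ⟨k, ?_, (pi_norm_le_iff_of_nonneg zero_le_one).2 fun j => ?_, hle⟩
  · rw [habs, inv_le_iff_one_le_mul₀' (hp i), ← mul_assoc, ← pow_succ']
    exact ((inv_lt_iff_one_lt_mul₀ hvi').1 hk').le
  · by_cases hj : j = i
    · rw [hj, Real.norm_eq_abs, habs]
      exact (le_inv_mul_iff₀' hvi').1 (by simpa using hk)
    · exact (hle j hj).trans hv

namespace IsInvariant

variable {E B : Set (ι → ℝ)}

theorem sub_self (hR : IsRealOrder R) (hB : IsInvariant R t B) : IsInvariant R t (B - B) where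
  closed := by
    obtain ⟨C, hC⟩ := hR.exists_norm_sub_le
    have hK : IsCompact (B ∩ Metric.closedBall 0 C) :=
      (isCompact_closedBall 0 C).inter_left hB.closed
    convert hB.closed.neg.add_left_of_isCompact hK using 1
    refine Set.Subset.antisymm ?_ ?_
    · rintro _ ⟨v, hv, w, hw, rfl⟩
      obtain ⟨z, hz, hvz⟩ := hC v
      refine ⟨v - z, ⟨hB.sub_mem hv hz, by simpa using hvz⟩, -(w - z),
        Set.neg_mem_neg.2 (hB.sub_mem hw hz), ?_⟩
      simp only
      abel
    · rintro _ ⟨v, hv, w, hw, rfl⟩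
      exact ⟨v, hv.1, -w, hw, sub_neg_eq_add v w⟩
  add_mem := by
    rintro _ z ⟨v, hv, w, hw, rfl⟩ hz
    exact ⟨v + z, hB.add_mem hv hz, w, hw, by simp only; abel⟩
  mul_mem := by
    rintro p _ hp ⟨v, hv, w, hw, rfl⟩
    exact ⟨p * v, hB.mul_mem hp hv, p * w, hB.mul_mem hp hw, (mul_sub p v w).symm⟩

theorem eq_univ_of_single [DecidableEq ι] (hR : IsRealOrder R) (hι : 2 < Fintype.card ι)
    (ht : t ≠ 0) (hE : IsInvariant R t E) {i : ι} {x : ℝ} (hx : x ≠ 0)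
    (hmem : Pi.single i x ∈ E) : E = Set.univ := by
  have mem_of_near : ∀ v, (∀ δ > 0, ∃ w ∈ E, ∀ j, dist (v j) (w j) < δ) → v ∈ E :=
    fun v h => hE.closed.closure_subset <| Metric.mem_closure_iff.2 fun δ hδ => by
      obtain ⟨w, hw, hvw⟩ := h δ hδ
      exact ⟨w, hw, (dist_pi_lt_iff hδ).2 hvw⟩
  have haxis : ∀ y, 0 < x * y → Pi.single i y ∈ E := by
    refine fun y hxy => mem_of_near _ fun δ hδ => ?_
    obtain ⟨p, hp, hpy⟩ := hR.exists_unit_apply_near hι ht i hxy hδ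
    refine ⟨_, hE.mul_mem hp hmem, fun j => ?_⟩
    obtain rfl | hj := eq_or_ne j i
    · rwa [Pi.mul_apply, Pi.single_eq_same, Pi.single_eq_same, dist_comm, Real.dist_eq]
    · simpa [hj] using hδ
  refine Set.eq_univ_of_forall fun r => mem_of_near r fun δ hδ => ?_
  obtain ⟨z, hz, hzr, hpos⟩ := hR.exists_mem_approx i hx r hδ
  refine ⟨_, hE.add_mem (haxis _ hpos) hz, fun j => ?_⟩
  obtain rfl | hj := eq_or_ne j i
  · simpa using hδ
  · simpa [hj, abs_sub_comm, Real.dist_eq] using hzr j hj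

-- Small nonzero points of `E` are expanded by powers of a unit until a given coordinate has size
-- about one, and in the limit all other coordinates vanish.
theorem eq_univ_of_accPt_zero (hR : IsRealOrder R) (hι : 2 < Fintype.card ι) (ht : t ≠ 0)
    (hE : IsInvariant R t E) (h : AccPt 0 (𝓟 E)) : E = Set.univ := by
  classical
  obtain ⟨i, hi⟩ : ∃ i, ∃ᶠ v in 𝓝 (0 : ι → ℝ), v ∈ E ∧ v i ≠ 0 := by
    by_contra! hcon
    have hall : ∀ᶠ v in 𝓝 (0 : ι → ℝ), ∀ i, v ∈ E → v i = 0 := eventually_all.2 fun i => by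
      simpa using hcon i
    obtain ⟨v, ⟨hv0, hvE⟩, hv⟩ := ((accPt_iff_frequently.1 h).and_eventually hall).exists
    exact hv0 (funext fun i => hv i hvE)
  obtain ⟨p, hp, hpi, hpj⟩ := hR.exists_unit_congr ht i
  have hK : IsCompact (E ∩ (Metric.closedBall 0 1 ∩ {v | (p i)⁻¹ ≤ |v i|})) :=
    ((isCompact_closedBall 0 1).inter_right
      (isClosed_le continuous_const (by fun_prop))).inter_left hE.closed
  have hnear : ∀ δ > 0, ∃ e ∈ E ∩ (Metric.closedBall 0 1 ∩ {v | (p i)⁻¹ ≤ |v i|}),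
      ‖e - Pi.single i (e i)‖ ≤ δ := fun δ hδ => by
    obtain ⟨v, ⟨hvE, hvi⟩, hvδ⟩ := (hi.and_eventually
      (Metric.closedBall_mem_nhds 0 (lt_min hδ one_pos))).exists
    rw [dist_zero_right, le_min_iff] at hvδ
    obtain ⟨k, hki, hk1, hkj⟩ := exists_pow_mul_norm_le_one hp.pos hpi hpj hvi hvδ.2
    refine ⟨p ^ k * v, ⟨hE.mul_mem (hp.pow k) hvE, by simpa using hk1, hki⟩,
      (pi_norm_le_iff_of_nonneg hδ.le).2 fun j => ?_⟩
    obtain rfl | hj := eq_or_ne j i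
    · simpa using hδ.le
    · rw [Pi.sub_apply, Pi.single_eq_of_ne hj, sub_zero]
      exact (hkj j hj).trans hvδ.1
  obtain ⟨e₀, he₀, -⟩ := hnear 1 one_pos
  obtain ⟨e, ⟨heE, -, hei⟩, hmin⟩ := hK.exists_isMinOn ⟨e₀, he₀⟩
    (f := fun e => ‖e - Pi.single i (e i)‖)
    (continuous_id.sub ((continuous_single i).comp (continuous_apply i))).norm.continuousOn
  have haxis : ‖e - Pi.single i (e i)‖ = 0 := by
    refine le_antisymm (le_of_forall_gt_imp_ge_of_dense fun δ hδ => ?_) (norm_nonneg _)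
    obtain ⟨e', he', hδ'⟩ := hnear δ hδ
    exact (hmin he').trans hδ'
  refine hE.eq_univ_of_single hR hι ht (i := i) (x := e i) ?_ ?_
  · exact abs_pos.1 ((inv_pos.2 (hp.pos i)).trans_le hei)
  · rwa [← sub_eq_zero.1 (norm_eq_zero.1 haxis)]

-- If two points of the unit orbit of `x` in `ℝ ^ ι / R` coincide, then `x` is a torsion point.
theorem exists_accPt_of_not_isTorsionPoint (hR : IsRealOrder R) [Nonempty ι] (ht : t ≠ 0)
    (hB : IsInvariant R t B) {x : ι → ℝ} (hx : x ∈ B) (hnt : ¬IsTorsionPoint R x) :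
    ∃ y, AccPt y (𝓟 B) := by
  obtain ⟨C, hC⟩ := hR.exists_norm_sub_le
  obtain ⟨p, hp, hpi, -⟩ := hR.exists_unit_congr ht (Classical.arbitrary ι)
  choose z hz hzC using fun n : ℕ => hC (p ^ n * x)
  have hmem : ∀ n, p ^ n * x - z n ∈ B ∩ Metric.closedBall 0 C := fun n =>
    ⟨hB.sub_mem (hB.mul_mem (hp.pow n) hx) (hz n), by simpa using hzC n⟩
  have hinf : (B ∩ Metric.closedBall 0 C).Infinite := fun hfin => by
    obtain ⟨m, n, hmn, heq⟩ := hfin.exists_lt_map_eq_of_forall_mem hmem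
    have hne : p ^ n - p ^ m ≠ 0 := sub_ne_zero.2 fun h =>
      (pow_lt_pow_right₀ hpi hmn).ne' (congrFun h _)
    obtain ⟨N, hN, w, hw, hNw⟩ :=
      hR.exists_mul_eq_natCast (R.sub_mem (hp.pow n).mem (hp.pow m).mem) hne
    refine hnt ⟨N, hN, ?_⟩
    have : N * x = w * (z n - z m) := by linear_combination -x * hNw - w * heq
    exact this ▸ R.mul_mem hw (R.sub_mem (hz n) (hz m))
  obtain ⟨y, -, hy⟩ := hinf.exists_accPt_of_subset_isCompact (isCompact_closedBall 0 C)
    Set.inter_subset_right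
  exact ⟨y, hy.mono (principal_mono.2 Set.inter_subset_left)⟩

theorem sub_self_eq_univ (hR : IsRealOrder R) (hι : 2 < Fintype.card ι) (ht : t ≠ 0)
    (hB : IsInvariant R t B) {x : ι → ℝ} (hx : x ∈ B) (hnt : ¬IsTorsionPoint R x) :
    B - B = Set.univ := by
  have : Nonempty ι := Fintype.card_pos_iff.1 (by omega)
  obtain ⟨y, hy⟩ := hB.exists_accPt_of_not_isTorsionPoint hR ht hx hnt
  have hyB : y ∈ B := hB.closed.closure_subset (mem_closure_iff_clusterPt.2 hy.clusterPt)
  refine (hB.sub_self hR).eq_univ_of_accPt_zero hR hι ht ?_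
  have h := hy.map (continuous_sub_right y).continuousAt sub_left_injective
  rw [_root_.sub_self, map_principal] at h
  exact h.mono (principal_mono.2 (Set.image_subset_iff.2 fun v hv => ⟨v, hv, y, hyB, rfl⟩))

theorem exists_translates_subset (hR : IsRealOrder R) (hι : 2 < Fintype.card ι) (ht : t ≠ 0)
    (hB : IsInvariant R t B) (hne : B.Nonempty) (hnt : ∀ x ∈ B, ¬IsTorsionPoint R x)
    (F : Finset (ι → ℝ)) (hF : ∀ τ ∈ F, t * τ ∈ R) :
    ∃ D ⊆ B, IsInvariant R t D ∧ D.Nonempty ∧ ∀ v ∈ D, ∀ τ ∈ F, v + τ ∈ B := by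
  classical
  induction F using Finset.induction with
  | empty => exact ⟨B, subset_rfl, hB, hne, by simp⟩
  | insert τ F _ ih =>
    obtain ⟨D, hDB, hD, ⟨x, hx⟩, hDF⟩ := ih fun τ hτ => hF τ (Finset.mem_insert_of_mem hτ)
    refine ⟨D ∩ (· + τ) ⁻¹' D, fun v hv => hDB hv.1,
      hD.inter (hD.preimage_add_right (hF τ (Finset.mem_insert_self τ F))), ?_, ?_⟩
    · obtain ⟨v, hv, w, hw, rfl⟩ : τ ∈ D - D :=
        hD.sub_self_eq_univ hR hι ht hx (hnt x (hDB hx)) ▸ Set.mem_univ τ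
      exact ⟨w, hw, by simpa using hv⟩
    · intro v hv σ hσ
      rcases Finset.mem_insert.1 hσ with rfl | hσ
      · exact hDB hv.2
      · exact hDF v hv.1 σ hσ

theorem exists_forall_add_mem (hR : IsRealOrder R) (hι : 2 < Fintype.card ι) (ht : t ≠ 0)
    (hB : IsInvariant R t B) (hne : B.Nonempty) (hnt : ∀ x ∈ B, ¬IsTorsionPoint R x) :
    ∃ v : ι → ℝ, ∀ τ : ι → ℝ, t * τ ∈ R → v + τ ∈ B := by
  obtain ⟨C, hC⟩ := hR.exists_norm_sub_le
  have hfin : {τ : ι → ℝ | t * τ ∈ R ∧ ‖τ‖ ≤ C}.Finite := by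
    have hinj : Function.Injective fun τ : ι → ℝ => t * τ := fun x y hxy => funext fun i =>
      mul_left_cancel₀ (Nat.cast_ne_zero.2 ht) (congrFun hxy i)
    refine ((hR.finite_inter_of_isBounded
      (Metric.isBounded_closedBall (x := 0) (r := ‖(t : ι → ℝ)‖ * C))).preimage
      hinj.injOn).subset fun τ hτ => ⟨?_, hτ.1⟩
    rw [mem_closedBall_zero_iff]
    exact (norm_mul_le _ _).trans (by gcongr; exact hτ.2)
  obtain ⟨D, -, -, ⟨v, hv⟩, hDF⟩ := hB.exists_translates_subset hR hι ht hne hnt hfin.toFinset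
    fun τ hτ => (hfin.mem_toFinset.1 hτ).1
  refine ⟨v, fun τ hτ => ?_⟩
  obtain ⟨w, hw, hτw⟩ := hC τ
  have hmem : t * (τ - w) ∈ R := by
    rw [mul_sub]; exact R.sub_mem hτ (R.mul_mem (natCast_mem R t) hw)
  have := hB.add_mem (hDF v hv (τ - w) (hfin.mem_toFinset.2 ⟨hmem, hτw⟩)) hw
  rwa [add_assoc, sub_add_cancel] at this

-- Otherwise `B` contains a translate of the lattice `t⁻¹ R` for every `t`, so it is dense.
theorem exists_isTorsionPoint (hR : IsRealOrder R) (hι : 2 < Fintype.card ι)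
    (hB : IsInvariant R 1 B) (hne : B.Nonempty) : ∃ x ∈ B, IsTorsionPoint R x := by
  by_contra! hnt
  obtain ⟨C, hC⟩ := hR.exists_norm_sub_le
  refine hnt 0 (hB.closed.closure_subset (Metric.mem_closure_iff.2 fun δ hδ => ?_))
    ⟨1, one_ne_zero, by simp⟩
  obtain ⟨t, ht⟩ := exists_nat_gt (max 0 (C / δ))
  have ht0 : (0 : ℝ) < t := (le_max_left _ _).trans_lt ht
  have hCt : C < t * δ := (div_lt_iff₀ hδ).1 ((le_max_right _ _).trans_lt ht)
  obtain ⟨v, hv⟩ := (hB.of_one t).exists_forall_add_mem hR hι (Nat.cast_pos.1 ht0).ne' hne hnt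
  obtain ⟨z, hz, hzC⟩ := hC ((t : ℝ) • -v)
  have heq : v + (t : ℝ)⁻¹ • z = -((t : ℝ)⁻¹ • ((t : ℝ) • -v - z)) := by
    ext i
    simp only [Pi.add_apply, Pi.neg_apply, Pi.smul_apply, Pi.sub_apply, smul_eq_mul]
    field_simp
    ring
  refine ⟨v + (t : ℝ)⁻¹ • z, hv _ ?_, ?_⟩
  · convert hz using 1
    ext i; simp [ht0.ne']
  · rw [dist_zero_left, heq, norm_neg, norm_smul, norm_inv, RCLike.norm_natCast,
      inv_mul_lt_iff₀ ht0]
    exact hzC.trans_lt hCt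

theorem not_accPt (hR : IsRealOrder R) (hι : 2 < Fintype.card ι) (hB : IsInvariant R 1 B)
    (hne : B ≠ Set.univ) (x : ι → ℝ) : ¬AccPt x (𝓟 B) := by
  intro hx
  obtain ⟨τ, hτ, t, ht, htτ⟩ := hB.derivedSet.exists_isTorsionPoint hR hι ⟨x, hx⟩
  have huniv : (· + τ) ⁻¹' B = Set.univ := by
    refine ((hB.of_one t).preimage_add_right htτ).eq_univ_of_accPt_zero hR hι ht ?_
    have h := (mem_derivedSet.1 hτ).map (continuous_sub_right τ).continuousAt sub_left_injective
    rw [_root_.sub_self, map_principal] at h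
    refine h.mono (principal_mono.2 (Set.image_subset_iff.2 fun v hv => ?_))
    simpa using hv
  refine hne (Set.eq_univ_of_forall fun v => ?_)
  simpa using huniv.ge (Set.mem_univ (v - τ))

theorem finite_inter_closedBall (hR : IsRealOrder R) (hι : 2 < Fintype.card ι)
    (hB : IsInvariant R 1 B) (hne : B ≠ Set.univ) (C : ℝ) :
    (B ∩ Metric.closedBall 0 C).Finite := by
  by_contra hinf
  obtain ⟨x, -, hx⟩ := Set.Infinite.exists_accPt_of_subset_isCompact hinf
    (isCompact_closedBall 0 C) Set.inter_subset_right
  exact hB.not_accPt hR hι hne x (hx.mono (principal_mono.2 Set.inter_subset_left))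

theorem exists_forall_dist_lt_imp_eq (hR : IsRealOrder R) (hι : 2 < Fintype.card ι)
    (hB : IsInvariant R 1 B) (hne : B ≠ Set.univ) :
    ∃ κ > 0, ∀ v ∈ B, ∀ w ∈ B, dist v w < κ → v = w := by
  obtain ⟨C, hC⟩ := hR.exists_norm_sub_le
  obtain ⟨κ, hκ, hsep⟩ : ∃ κ > 0, ∀ v ∈ B ∩ Metric.closedBall 0 (C + 1),
      ∀ w ∈ B ∩ Metric.closedBall 0 (C + 1), dist v w < κ → v = w := by
    have hfin := hB.finite_inter_closedBall hR hι hne (C + 1)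
    rcases (B ∩ Metric.closedBall 0 (C + 1)).subsingleton_or_nontrivial with hs | hs
    · exact ⟨1, one_pos, fun v hv w hw _ => hs hv hw⟩
    · refine ⟨_, hfin.infsep_pos_iff_nontrivial.2 hs, fun v hv w hw hvw => ?_⟩
      by_contra h
      exact hvw.not_ge (Set.infsep_le_dist_of_mem hv hw h)
  refine ⟨min κ 1, lt_min hκ one_pos, fun v hv w hw hvw => ?_⟩
  obtain ⟨z, hz, hzC⟩ := hC v
  refine sub_left_injective (hsep (v - z) ⟨hB.sub_mem hv hz, ?_⟩ (w - z) ⟨hB.sub_mem hw hz, ?_⟩ ?_)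
  · simpa using hzC.trans (le_add_of_nonneg_right zero_le_one)
  · have hwv : ‖w - v‖ ≤ 1 := by
      rw [← dist_eq_norm, dist_comm]; exact (hvw.trans_le (min_le_right _ _)).le
    rw [mem_closedBall_zero_iff, ← sub_add_sub_cancel w v z, add_comm C]
    exact (norm_add_le _ _).trans (add_le_add hwv hzC)
  · simpa using hvw.trans_le (min_le_left _ _)

end IsInvariant

end RealOrder

section Shear

/-- The unipotent matrices acting on grids in `ℝ³` by adding multiples of the last coordinate to
the first two. -/
def shear (s : ℝ × ℝ) : Matrix (Fin 3) (Fin 3) ℝ := !![1, 0, s.1; 0, 1, s.2; 0, 0, 1]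

/-- The point `s` for which `shear s` maps `v` to the third coordinate axis. It is meaningful only
if `v 2 ≠ 0`. -/
noncomputable def slope (v : Fin 3 → ℝ) : ℝ × ℝ := (-v 0 / v 2, -v 1 / v 2)

theorem shear_mulVec (s : ℝ × ℝ) (v : Fin 3 → ℝ) :
    shear s *ᵥ v = ![v 0 + s.1 * v 2, v 1 + s.2 * v 2, v 2] := by
  ext i
  fin_cases i <;> simp [shear, Matrix.mulVec, dotProduct, Fin.sum_univ_three]

theorem shear_slope_add_mulVec {v : Fin 3 → ℝ} (hv : v 2 ≠ 0) (h : ℝ) :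
    shear (slope v + (h, 0)) *ᵥ v = ![h * v 2, 0, v 2] := by
  rw [shear_mulVec]
  simp only [slope, Prod.fst_add, Prod.snd_add, add_zero, add_mul, div_mul_cancel₀ _ hv]
  congr! 1
  · ring
  · simp

theorem slope_mem_closure {A : Set (Fin 3 → ℝ)} {s : ℝ × ℝ} {C : ℝ}
    (hA : ∃ᶠ Y : ℝ in atTop, ∃ v ∈ A, ‖v - Y • ![-s.1, -s.2, 1]‖ ≤ C) :
    s ∈ closure (slope '' (A ∩ {v | v 2 ≠ 0})) := by
  have hcont : ContinuousAt slope ![-s.1, -s.2, 1] :=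
    ((continuous_apply 0).neg.continuousAt.div (continuous_apply 2).continuousAt (by simp)).prodMk
      ((continuous_apply 1).neg.continuousAt.div (continuous_apply 2).continuousAt (by simp))
  have hslope : slope ![-s.1, -s.2, 1] = s := by simp [slope]
  rw [mem_closure_iff_nhds]
  intro U hU
  have hev : ∀ᶠ v in 𝓝 ![-s.1, -s.2, 1], slope v ∈ U ∧ v 2 ≠ 0 :=
    (hcont.tendsto.eventually_mem (by rwa [hslope])).and
      ((continuous_apply 2).continuousAt.eventually_ne (by simp))
  obtain ⟨δ, hδ, hball⟩ := Metric.eventually_nhds_iff.1 hev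
  obtain ⟨Y, ⟨v, hv, hvC⟩, hY⟩ := (hA.and_eventually (eventually_gt_atTop (max 0 (C / δ)))).exists
  have hY0 : 0 < Y := (le_max_left _ _).trans_lt hY
  have hdist : dist (Y⁻¹ • v) ![-s.1, -s.2, 1] < δ := by
    have : Y⁻¹ • v - ![-s.1, -s.2, 1] = Y⁻¹ • (v - Y • ![-s.1, -s.2, 1]) := by
      rw [smul_sub, inv_smul_smul₀ hY0.ne']
    rw [dist_eq_norm, this, norm_smul, norm_inv, Real.norm_of_nonneg hY0.le, inv_mul_lt_iff₀ hY0]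
    exact hvC.trans_lt ((div_lt_iff₀ hδ).1 ((le_max_right _ _).trans_lt hY))
  obtain ⟨hU, hne⟩ := hball hdist
  have hscale : slope (Y⁻¹ • v) = slope v := by
    simp only [slope, Pi.smul_apply, smul_eq_mul, ← mul_neg]
    rw [mul_div_mul_left _ _ (inv_ne_zero hY0.ne'), mul_div_mul_left _ _ (inv_ne_zero hY0.ne')]
  refine ⟨slope v, hscale ▸ hU, v, ⟨hv, ?_⟩, rfl⟩
  exact right_ne_zero_of_mul (by simpa using hne : Y⁻¹ * v 2 ≠ 0)

end Shear

section Bad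

variable {R : Subring (Fin 3 → ℝ)} {ε : ℝ} {s : ℝ × ℝ} {p v w : Fin 3 → ℝ} {t : ℕ}

/-- The vectors `v` such that the points of the grid `v + R` which `shear s` maps into the
half-space `0 < x 0` are mapped to points with product of coordinates at least `ε`. -/
def bad (R : Subring (Fin 3 → ℝ)) (ε : ℝ) (s : ℝ × ℝ) : Set (Fin 3 → ℝ) :=
  {v | ∀ w ∈ R, 0 < (shear s *ᵥ (v + w)) 0 → ε ≤ |∏ i, (shear s *ᵥ (v + w)) i|}

/-- The action on shear parameters of conjugation by the diagonal matrix with entries `p`. -/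
noncomputable def conjShear (p : Fin 3 → ℝ) (s : ℝ × ℝ) : ℝ × ℝ :=
  (s.1 * (p 0 / p 2), s.2 * (p 1 / p 2))

theorem shear_conjShear_mulVec (hp : p 2 ≠ 0) :
    shear (conjShear p s) *ᵥ (p * v) = p * (shear s *ᵥ v) := by
  rw [shear_mulVec, shear_mulVec]
  ext i
  fin_cases i <;> simp [conjShear] <;> field_simp

theorem norm_conjShear_le {δ : ℝ} (hp : ∀ i, 0 < p i) (hpδ : ∀ i ≠ 2, p i ≤ δ * p 2) :
    ‖conjShear p s‖ ≤ δ * ‖s‖ := by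
  have hcoord : ∀ i ≠ 2, ∀ a : ℝ, |a| ≤ ‖s‖ → ‖a * (p i / p 2)‖ ≤ δ * ‖s‖ := fun i hi a ha => by
    have hpos : 0 < p i / p 2 := div_pos (hp i) (hp 2)
    rw [Real.norm_eq_abs, abs_mul, abs_of_pos hpos, mul_comm]
    exact mul_le_mul ((div_le_iff₀ (hp 2)).2 (hpδ i hi)) ha (abs_nonneg a)
      (hpos.le.trans ((div_le_iff₀ (hp 2)).2 (hpδ i hi)))
  exact norm_prod_le_iff.2 ⟨hcoord 0 (by decide) _ (norm_fst_le s),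
    hcoord 1 (by decide) _ (norm_snd_le s)⟩

theorem isClosed_setOf_mem_bad (R : Subring (Fin 3 → ℝ)) (ε : ℝ) :
    IsClosed {q : (ℝ × ℝ) × (Fin 3 → ℝ) | q.2 ∈ bad R ε q.1} := by
  have hcont (w : Fin 3 → ℝ) :
      Continuous fun q : (ℝ × ℝ) × (Fin 3 → ℝ) => shear q.1 *ᵥ (q.2 + w) := by
    simp only [shear_mulVec, Pi.add_apply]
    fun_prop
  have hset : {q : (ℝ × ℝ) × (Fin 3 → ℝ) | q.2 ∈ bad R ε q.1} =
      ⋂ w ∈ R, {q | 0 < (shear q.1 *ᵥ (q.2 + w)) 0 → ε ≤ |∏ i, (shear q.1 *ᵥ (q.2 + w)) i|} := by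
    ext q
    simp [bad]
  rw [hset]
  exact isClosed_biInter fun w _ => isClosed_imp
    (isOpen_lt continuous_const ((continuous_apply 0).comp (hcont w)))
    (isClosed_le continuous_const
      (continuous_finsetProd _ fun i _ => (continuous_apply i).comp (hcont w)).abs)

theorem add_mem_bad (hv : v ∈ bad R ε s) (hw : w ∈ R) : v + w ∈ bad R ε s := fun z hz => by
  rw [add_assoc]; exact hv (w + z) (R.add_mem hw hz)

theorem sub_mem_bad (hv : v ∈ bad R ε s) (hw : w ∈ R) : v - w ∈ bad R ε s := by
  rw [sub_eq_add_neg]; exact add_mem_bad hv (R.neg_mem hw)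

theorem mul_mem_bad (hR : IsRealOrder R) (hp : IsCongrUnit R t p) (hv : v ∈ bad R ε s) :
    p * v ∈ bad R ε (conjShear p s) := by
  intro w hw hpos
  have hpw : p * v + w = p * (v + p⁻¹ * w) := by linear_combination -w * hp.mul_inv_cancel
  rw [hpw, shear_conjShear_mulVec (hp.pos 2).ne'] at hpos ⊢
  simp only [Pi.mul_apply, Finset.prod_mul_distrib, hR.prod_eq_one hp, one_mul] at hpos ⊢
  exact hv _ (R.mul_mem hp.inv_mem hw) (pos_of_mul_pos_right hpos (hp.pos 0).le)

theorem isInvariant_bad_zero (hR : IsRealOrder R) (ε : ℝ) : IsInvariant R 1 (bad R ε 0) where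
  closed := (isClosed_setOf_mem_bad R ε).preimage (Continuous.prodMk_right 0)
  add_mem := add_mem_bad
  mul_mem hp hv := by
    simpa only [conjShear, Prod.fst_zero, Prod.snd_zero, zero_mul, Prod.mk_zero_zero] using
      mul_mem_bad hR hp hv

theorem bad_zero_ne_univ (hε : 0 < ε) : bad R ε 0 ≠ Set.univ := by
  intro h
  have := h.ge (Set.mem_univ ![ε / 2, 1, 1]) 0 R.zero_mem
  simp only [add_zero, shear_mulVec, Fin.prod_univ_three, Matrix.cons_val, Prod.fst_zero,
    Prod.snd_zero, mul_one, half_pos hε, forall_const, abs_of_pos] at this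
  linarith

theorem eventually_exists_bad_zero_dist_lt (hR : IsRealOrder R) (ε : ℝ) {κ : ℝ} (hκ : 0 < κ) :
    ∀ᶠ s in 𝓝 (0 : ℝ × ℝ), ∀ v ∈ bad R ε s, ∃ b ∈ bad R ε 0, dist v b < κ := by
  obtain ⟨C, hC⟩ := hR.exists_norm_sub_le
  have hcompact : ∀ᶠ s in 𝓝 (0 : ℝ × ℝ), ∀ v ∈ Metric.closedBall (0 : Fin 3 → ℝ) C,
      v ∈ bad R ε s → ∃ b ∈ bad R ε 0, dist v b < κ := by
    refine (isCompact_closedBall 0 C).eventually_forall_of_forall_eventually fun x _ => ?_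
    by_cases hx : x ∈ bad R ε 0
    · filter_upwards [continuous_snd.tendsto ((0 : ℝ × ℝ), x) |>.eventually_mem
        (Metric.ball_mem_nhds x hκ)] with q hq _ using ⟨x, hx, hq⟩
    · filter_upwards [(isClosed_setOf_mem_bad R ε).isOpen_compl.mem_nhds hx] with q hq h
        using absurd h hq
  filter_upwards [hcompact] with s hs v hv
  obtain ⟨z, hz, hvz⟩ := hC v
  obtain ⟨b, hb, hd⟩ := hs (v - z) (by simpa using hvz) (sub_mem_bad hv hz)
  exact ⟨b + z, add_mem_bad hb hz, by rwa [← dist_sub_right _ _ z, add_sub_cancel_right]⟩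

end Bad

section BadIsEmpty

variable {R : Subring (Fin 3 → ℝ)} {ε : ℝ}

theorem IsRealOrder.exists_unit_one_lt_forall_le (hR : IsRealOrder R) (l : Fin 3) :
    ∃ u, IsCongrUnit R 1 u ∧ 1 < u l ∧ ∀ i, u i ≤ u 2 := by
  obtain ⟨f, hf, hf2, hfj⟩ := hR.exists_unit 2
  rcases eq_or_ne l 2 with rfl | hl
  · exact ⟨f, hf, hf2, fun i => (eq_or_ne i 2).elim (fun h => h ▸ le_rfl)
      fun h => ((hfj i h).trans hf2).le⟩
  obtain ⟨k, hkl, hk2, huniv⟩ :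
      ∃ k, k ≠ l ∧ k ≠ 2 ∧ (Finset.univ : Finset (Fin 3)) = {l, k, 2} := by
    revert l; decide
  have hy : 1 < (f l)⁻¹ := (one_lt_inv₀ (hf.pos l)).2 (hfj l hl)
  obtain ⟨u, hu, ⟨hul1, hul2⟩, huj⟩ :=
    hR.exists_unit_apply_mem_Ioc hf (hfj l hl) (pow_pos (hf.pos l) 2)
  have huk : u k ≤ f l ^ 2 := huj k hkl (hfj k hk2).le
  have hu2 : (f l)⁻¹ ≤ u 2 := by
    have hprod := hR.prod_eq_one hu
    rw [huniv, Finset.prod_insert (by simp [hl, hkl.symm]), Finset.prod_pair hk2, ← mul_assoc]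
      at hprod
    have hlk : u l * u k ≤ f l := by
      calc u l * u k ≤ (f l)⁻¹ * f l ^ 2 :=
            mul_le_mul hul2 huk (hu.pos k).le (inv_pos.2 (hf.pos l)).le
        _ = f l := by rw [pow_two, inv_mul_cancel_left₀ (hf.pos l).ne']
    rw [inv_le_iff_one_le_mul₀' (hf.pos l), ← hprod]
    exact mul_le_mul_of_nonneg_right hlk (hu.pos 2).le
  refine ⟨u, hu, hul1, fun i => ?_⟩
  have hi : i = l ∨ i = k ∨ i = 2 := by simpa using huniv.le (Finset.mem_univ i)
  rcases hi with rfl | rfl | rfl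
  · exact hul2.trans hu2
  · exact huk.trans (((pow_le_one₀ (hf.pos l).le (hfj l hl).le).trans hy.le).trans hu2)
  · exact le_rfl

theorem dist_unit_pow_mul_lt (hR : IsRealOrder R) {κ κ₀ σ : ℝ} {u v b : Fin 3 → ℝ} {s : ℝ × ℝ}
    (hsep : ∀ v ∈ bad R ε 0, ∀ w ∈ bad R ε 0, dist v w < κ₀ → v = w)
    (hnear : ∀ s : ℝ × ℝ, ‖s‖ < σ → ∀ v ∈ bad R ε s, ∃ b ∈ bad R ε 0, dist v b < κ)
    (hu : IsCongrUnit R 1 u) (hu2 : ∀ i, u i ≤ u 2) (hκ : (u 2 + 1) * κ ≤ κ₀) (hκ0 : 0 < κ)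
    (hs : ‖s‖ < σ) (hv : v ∈ bad R ε s) (hb : b ∈ bad R ε 0) (hvb : dist v b < κ) (m : ℕ) :
    dist (u ^ m * v) (u ^ m * b) < κ := by
  induction m with
  | zero => simpa using hvb
  | succ m ih =>
    have hp := hu.pow (m + 1)
    have hconj : ‖conjShear (u ^ (m + 1)) s‖ ≤ 1 * ‖s‖ :=
      norm_conjShear_le hp.pos fun i _ => by
        simpa using pow_le_pow_left₀ (hu.pos i).le (hu2 i) (m + 1)
    obtain ⟨b', hb', hd⟩ := hnear _ (hconj.trans_lt (by rwa [one_mul])) _ (mul_mem_bad hR hp hv)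
    have hub : u ^ (m + 1) * b ∈ bad R ε 0 := (isInvariant_bad_zero hR ε).mul_mem hp hb
    have hstep : dist (u ^ (m + 1) * v) (u ^ (m + 1) * b) < u 2 * κ := by
      rw [dist_pi_lt_iff (mul_pos (hu.pos 2) hκ0)]
      intro i
      have hi := (dist_pi_lt_iff hκ0).1 ih i
      rw [pow_succ', mul_assoc, mul_assoc, Pi.mul_apply, Pi.mul_apply u, Real.dist_eq, ← mul_sub,
        abs_mul, abs_of_pos (hu.pos i)]
      exact mul_lt_mul' (hu2 i) hi (abs_nonneg _) (hu.pos 2)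
    have heq : b' = u ^ (m + 1) * b := hsep _ hb' _ hub <|
      (dist_triangle_left b' (u ^ (m + 1) * b) (u ^ (m + 1) * v)).trans_lt (by linarith)
    rwa [heq] at hd

/- The bad points for a small `s` stay near the bad points for `0` under every unit which does not
increase `s`. As these units expand each coordinate, the two sets agree near each other. -/
theorem eventually_bad_subset_bad_zero (hR : IsRealOrder R) (hε : 0 < ε) :
    ∀ᶠ s in 𝓝 (0 : ℝ × ℝ), bad R ε s ⊆ bad R ε 0 := by
  obtain ⟨κ₀, hκ₀, hsep⟩ :=
    (isInvariant_bad_zero hR ε).exists_forall_dist_lt_imp_eq hR (by simp) (bad_zero_ne_univ hε)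
  choose u hu hul hu2 using hR.exists_unit_one_lt_forall_le
  have hev : ∀ᶠ κ in 𝓝[>] (0 : ℝ), ∀ l, (u l 2 + 1) * κ ≤ κ₀ := eventually_all.2 fun l =>
    ((continuous_const_mul (u l 2 + 1)).tendsto' 0 0 (mul_zero _)).mono_left nhdsWithin_le_nhds
      |>.eventually_le_const hκ₀
  obtain ⟨κ, huκ, hκ : 0 < κ⟩ := (hev.and self_mem_nhdsWithin).exists
  obtain ⟨σ, hσ, hnear⟩ :=
    Metric.eventually_nhds_iff.1 (eventually_exists_bad_zero_dist_lt hR ε hκ)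
  simp only [dist_zero_right] at hnear
  refine Metric.eventually_nhds_iff.2 ⟨σ, hσ, fun s hs v hv => ?_⟩
  rw [dist_zero_right] at hs
  obtain ⟨b, hb, hvb⟩ := hnear hs v hv
  suffices v = b by rwa [this]
  ext l
  by_contra hne
  have hpos : 0 < |v l - b l| := abs_pos.2 (sub_ne_zero.2 hne)
  obtain ⟨m, hm⟩ := pow_unbounded_of_one_lt (κ / |v l - b l|) (hul l)
  rw [div_lt_iff₀ hpos] at hm
  have hd := dist_unit_pow_mul_lt hR hsep (fun _ h => hnear h) (hu l) (hu2 l) (huκ l) hκ hs hv hb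
    hvb m
  have hl := (dist_pi_lt_iff hκ).1 hd l
  rw [Pi.mul_apply, Pi.mul_apply (u l ^ m) b, Real.dist_eq, ← mul_sub, abs_mul, Pi.pow_apply,
    abs_of_pos (pow_pos ((hu l).pos l) m)] at hl
  exact hl.not_gt hm

theorem bad_subset_bad_zero (hR : IsRealOrder R) (hε : 0 < ε) (s : ℝ × ℝ) :
    bad R ε s ⊆ bad R ε 0 := by
  obtain ⟨σ, hσ, hnear⟩ := Metric.eventually_nhds_iff.1 (eventually_bad_subset_bad_zero hR hε)
  intro v hv
  have hS : 0 < ‖s‖ + 1 := by positivity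
  obtain ⟨p, hp, hp2, hpj⟩ := hR.exists_unit_lt 2 (div_pos hσ hS)
  have hconj : dist (conjShear p s) 0 < σ := by
    rw [dist_zero_right]
    calc ‖conjShear p s‖ ≤ σ / (‖s‖ + 1) * ‖s‖ := norm_conjShear_le hp.pos fun i hi =>
          (hpj i hi).le.trans (le_mul_of_one_le_right (by positivity) hp2.le)
      _ < σ / (‖s‖ + 1) * (‖s‖ + 1) := by gcongr; linarith
      _ = σ := div_mul_cancel₀ _ hS.ne'
  have hpv : p * v ∈ bad R ε 0 := hnear hconj (mul_mem_bad hR hp hv)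
  have hvp : v = p⁻¹ * (p * v) := by linear_combination -v * hp.mul_inv_cancel
  rw [hvp]
  exact (isInvariant_bad_zero hR ε).mul_mem hp.inv hpv

/- If `shear s` maps a point of the grid `b + R` to the third coordinate axis, then perturbing `s`
makes its first coordinate positive and the product of its coordinates zero. -/
theorem dense_setOf_notMem_bad (hR : IsRealOrder R) (hε : 0 < ε) (b : Fin 3 → ℝ) :
    Dense {s | b ∉ bad R ε s} := by
  intro s
  obtain ⟨C, hC⟩ := hR.exists_norm_sub_le
  have hslope : s ∈ closure (slope '' ({v | v - b ∈ R} ∩ {v | v 2 ≠ 0})) := by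
    refine slope_mem_closure (C := C) (Frequently.of_forall fun Y => ?_)
    obtain ⟨w, hw, h⟩ := hC (Y • ![-s.1, -s.2, 1] - b)
    exact ⟨b + w, by simpa using hw, by rwa [← norm_neg, neg_sub, ← sub_sub]⟩
  refine closure_minimal ?_ isClosed_closure hslope
  rintro _ ⟨v, ⟨hv, hv2⟩, rfl⟩
  have hlim : Tendsto (fun h : ℝ => slope v + (h * v 2, 0)) (𝓝[>] 0) (𝓝 (slope v)) := by
    refine tendsto_nhdsWithin_of_tendsto_nhds (Continuous.tendsto' (by fun_prop) _ _ ?_)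
    simp
  refine mem_closure_of_tendsto hlim ?_
  filter_upwards [self_mem_nhdsWithin] with h (hh : 0 < h) hb
  have := hb (v - b) hv
  rw [add_sub_cancel, shear_slope_add_mulVec hv2] at this
  have hpos : 0 < h * v 2 * v 2 := by rw [mul_assoc]; exact mul_pos hh (mul_self_pos.2 hv2)
  simp only [Matrix.cons_val, hpos, Fin.prod_univ_three, mul_zero, zero_mul, abs_zero,
    forall_const] at this
  exact this.not_gt hε

theorem exists_isOpen_dense_bad_eq_empty (hR : IsRealOrder R) (hε : 0 < ε) :
    ∃ U : Set (ℝ × ℝ), IsOpen U ∧ Dense U ∧ ∀ s ∈ U, bad R ε s = ∅ := by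
  obtain ⟨C, hC⟩ := hR.exists_norm_sub_le
  have hfin := (isInvariant_bad_zero hR ε).finite_inter_closedBall hR (by simp)
    (bad_zero_ne_univ hε) C
  have hopen : ∀ b, IsOpen {s | b ∉ bad R ε s} := fun b =>
    (isClosed_setOf_mem_bad R ε).isOpen_compl.preimage (Continuous.prodMk_left b)
  refine ⟨⋂ b ∈ bad R ε 0 ∩ Metric.closedBall 0 C, {s | b ∉ bad R ε s},
    hfin.isOpen_biInter fun b _ => hopen b, dense_biInter_of_isOpen (fun b _ => hopen b)
      hfin.countable fun b _ => dense_setOf_notMem_bad hR hε b, fun s hs => ?_⟩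
  refine Set.eq_empty_of_forall_notMem fun v hv => ?_
  obtain ⟨w, hw, hvw⟩ := hC v
  have hb := sub_mem_bad hv hw
  exact Set.mem_iInter₂.1 hs _ ⟨bad_subset_bad_zero hR hε s hb, by simpa using hvw⟩ hb

end BadIsEmpty

section PrimitiveDirections

theorem frequently_exists_isCoprime (α β : ℝ) :
    ∃ᶠ Y : ℝ in atTop, ∃ m n : ℤ, IsCoprime m n ∧ |m - Y * α| ≤ 1 ∧ |n - Y * β| ≤ 1 := by
  have abs_floor_sub_le : ∀ x : ℝ, |⌊x⌋ - x| ≤ 1 := fun x => by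
    rw [abs_le]; constructor <;> linarith [Int.floor_le x, Int.lt_floor_add_one x]
  by_cases hα : α = 0
  · exact Frequently.of_forall fun Y => ⟨1, ⌊Y * β⌋, isCoprime_one_left, by simp [hα],
      abs_floor_sub_le _⟩
  refine frequently_atTop.2 fun B => ?_
  obtain ⟨p, hpB, hp⟩ := Nat.exists_infinite_primes ⌈B * |α|⌉₊
  have hα0 : 0 < |α| := abs_pos.2 hα
  obtain ⟨e, he, heα⟩ : ∃ e : ℤ, IsUnit e ∧ e * |α| = α := by
    rcases lt_or_gt_of_ne hα with h | h
    · exact ⟨-1, isUnit_one.neg, by simp [abs_of_neg h]⟩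
    · exact ⟨1, isUnit_one, by simp [abs_of_pos h]⟩
  have hY : ((e * p : ℤ) : ℝ) = p / |α| * α := by
    push_cast
    rw [div_mul_eq_mul_div, eq_div_iff hα0.ne']
    linear_combination (p : ℝ) * heα
  obtain ⟨n, hpn, hn⟩ : ∃ n : ℤ, ¬(p : ℤ) ∣ n ∧ |n - p / |α| * β| ≤ 1 := by
    by_cases h : (p : ℤ) ∣ ⌊p / |α| * β⌋
    · refine ⟨⌊p / |α| * β⌋ + 1, fun h' => ?_, ?_⟩
      · exact (Nat.prime_iff_prime_int.1 hp).not_dvd_one ((Int.dvd_add_right h).1 h')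
      · rw [abs_le]
        push_cast
        constructor <;> linarith [Int.floor_le (p / |α| * β), Int.lt_floor_add_one (p / |α| * β)]
    · exact ⟨_, h, abs_floor_sub_le _⟩
  refine ⟨p / |α|, ?_, e * p, n, ?_, by simp [hY], hn⟩
  · exact (le_div_iff₀ hα0).2 (Nat.ceil_le.1 hpB)
  · rw [isCoprime_mul_unit_left_left he]
    exact (Nat.prime_iff_prime_int.1 hp).coprime_iff_not_dvd.2 hpn

theorem dense_slope_image_isCoprime {V : Matrix (Fin 3) (Fin 3) ℝ} (hV : IsUnit V.det) :
    Dense (slope '' ({v | ∃ m : Fin 3 → ℤ, IsCoprime (m 1) (m 2) ∧ v = V *ᵥ (Int.cast ∘ m)} ∩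
      {v | v 2 ≠ 0})) := by
  intro s
  set a : Fin 3 → ℝ := V⁻¹ *ᵥ ![-s.1, -s.2, 1]
  have ha : V *ᵥ a = ![-s.1, -s.2, 1] := by
    rw [Matrix.mulVec_mulVec, Matrix.mul_nonsing_inv V hV, Matrix.one_mulVec]
  set L := (Matrix.mulVecLin V).toContinuousLinearMap
  refine slope_mem_closure (C := ‖L‖) ((frequently_exists_isCoprime (a 1) (a 2)).mono ?_)
  rintro Y ⟨m, n, hmn, hm, hn⟩
  refine ⟨_, ⟨![⌊Y * a 0⌋, m, n], hmn, rfl⟩, ?_⟩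
  rw [← ha, ← Matrix.mulVec_smul, ← Matrix.mulVec_sub]
  refine (L.le_opNorm _).trans (mul_le_of_le_one_right (norm_nonneg _) ?_)
  refine (pi_norm_le_iff_of_nonneg zero_le_one).2 fun i => ?_
  fin_cases i
  · have := Int.floor_le (Y * a 0)
    have := Int.lt_floor_add_one (Y * a 0)
    change |(⌊Y * a 0⌋ : ℝ) - Y * a 0| ≤ 1
    exact abs_le.2 (by constructor <;> linarith)
  · exact hm
  · exact hn

end PrimitiveDirections

section Good

variable {ε κ : ℝ} {M : Matrix (Fin 3) (Fin 3) ℝ}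

/-- The property of a lattice with basis the columns of `M` that each of its translates has a point
at which the first coordinate exceeds `κ` and the product of the coordinates is less than `ε` in
absolute value. -/
def IsGood (ε κ : ℝ) (M : Matrix (Fin 3) (Fin 3) ℝ) : Prop :=
  ∀ r : Fin 3 → ℝ, ∃ z : Fin 3 → ℤ,
    κ < (M *ᵥ (r + Int.cast ∘ z)) 0 ∧ |∏ i, (M *ᵥ (r + Int.cast ∘ z)) i| < ε

namespace IsGood

theorem mono {κ' : ℝ} (hM : IsGood ε κ M) (h : κ' ≤ κ) : IsGood ε κ' M :=
  fun r => (hM r).imp fun _ hz => ⟨h.trans_lt hz.1, hz.2⟩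

theorem mul_map_intCast (hM : IsGood ε κ M) {N : Matrix (Fin 3) (Fin 3) ℤ} (hN : IsUnit N.det) :
    IsGood ε κ (M * N.map (↑)) := by
  intro r
  obtain ⟨z, hz⟩ := hM (N.map (↑) *ᵥ r)
  refine ⟨N⁻¹ *ᵥ z, ?_⟩
  have hcast : N.map (↑) *ᵥ (Int.cast ∘ (N⁻¹ *ᵥ z)) = (Int.cast ∘ z : Fin 3 → ℝ) := by
    ext i
    refine (RingHom.map_mulVec (Int.castRingHom ℝ) N (N⁻¹ *ᵥ z) i).symm.trans ?_
    rw [Matrix.mulVec_mulVec, Matrix.mul_nonsing_inv N hN, Matrix.one_mulVec]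
    rfl
  rwa [← Matrix.mulVec_mulVec, Matrix.mulVec_add, hcast]

theorem of_mul_map_intCast {N : Matrix (Fin 3) (Fin 3) ℤ} (hN : IsUnit N.det)
    (hM : IsGood ε κ (M * N.map (↑))) : IsGood ε κ M := by
  have := hM.mul_map_intCast (N := N⁻¹) (Matrix.isUnit_nonsing_inv_det N hN)
  rwa [mul_assoc, ← Matrix.map_mul_intCast, Matrix.mul_nonsing_inv N hN,
    Matrix.map_one _ Int.cast_zero Int.cast_one, mul_one] at this

theorem of_diagonal_mul {a : Fin 3 → ℝ} (ha : 0 < a 0) (hprod : 1 ≤ |∏ i, a i|)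
    (hM : IsGood ε κ (Matrix.diagonal a * M)) : IsGood ε (κ / a 0) M := by
  intro r
  obtain ⟨z, hz, hlt⟩ := hM r
  simp only [← Matrix.mulVec_mulVec, Matrix.mulVec_diagonal, Finset.prod_mul_distrib, abs_mul]
    at hz hlt
  exact ⟨z, (div_lt_iff₀' ha).2 hz, (le_mul_of_one_le_left (abs_nonneg _) hprod).trans_lt hlt⟩

theorem eventually (hM : IsGood ε 0 M) :
    ∀ᶠ p in 𝓝 ((0 : ℝ), M), IsGood ε p.1 p.2 := by
  have hcompact : ∀ᶠ p in 𝓝 ((0 : ℝ), M), ∀ r ∈ Set.Icc (0 : Fin 3 → ℝ) 1, ∃ z : Fin 3 → ℤ,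
      p.1 < (p.2 *ᵥ (r + Int.cast ∘ z)) 0 ∧ |∏ i, (p.2 *ᵥ (r + Int.cast ∘ z)) i| < ε := by
    refine isCompact_Icc.eventually_forall_of_forall_eventually fun r _ => ?_
    obtain ⟨z, hz⟩ := hM r
    have hopen : IsOpen {q : (ℝ × Matrix (Fin 3) (Fin 3) ℝ) × (Fin 3 → ℝ) |
        q.1.1 < (q.1.2 *ᵥ (q.2 + Int.cast ∘ z)) 0 ∧
          |∏ i, (q.1.2 *ᵥ (q.2 + Int.cast ∘ z)) i| < ε} := by
      have hcont : Continuous fun q : (ℝ × Matrix (Fin 3) (Fin 3) ℝ) × (Fin 3 → ℝ) =>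
          q.1.2 *ᵥ (q.2 + Int.cast ∘ z) :=
        (continuous_snd.comp continuous_fst).matrix_mulVec (continuous_snd.add continuous_const)
      have happly := fun i => (continuous_apply i).comp hcont
      exact (isOpen_lt (continuous_fst.comp continuous_fst) (happly 0)).inter
        (isOpen_lt (continuous_finsetProd _ fun i _ => happly i).abs continuous_const)
    exact (hopen.eventually_mem hz).mono fun q hq => ⟨z, hq⟩
  filter_upwards [hcompact] with p hp r
  obtain ⟨z, hz⟩ := hp (fun i => Int.fract (r i))
    ⟨fun i => Int.fract_nonneg _, fun i => (Int.fract_lt_one _).le⟩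
  refine ⟨z - fun i => ⌊r i⌋, ?_⟩
  have : r + Int.cast ∘ (z - fun i => ⌊r i⌋) = (fun i => Int.fract (r i)) + Int.cast ∘ z := by
    ext i
    simp only [Pi.add_apply, Function.comp_apply, Pi.sub_apply, Int.cast_sub, Int.fract]
    ring
  rwa [this]

end IsGood

/-- The matrix of a lattice of covolume one containing the third standard basis vector, normalised
by a diagonal matrix and with the parameters of its dual lattice as coordinates. -/
def shape (p : ℝ × ℝ × ℝ × ℝ) : Matrix (Fin 3) (Fin 3) ℝ :=
  !![1, p.1, 0; -p.2.1, 1 - p.2.1 * p.1, 0; p.2.2.1, p.2.2.2, 1]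

theorem continuous_shape : Continuous shape := by
  unfold shape; fun_prop

theorem IsGood.exists_shape (h0 : 0 < M 0 0) (h02 : M 0 2 = 0) (h12 : M 1 2 = 0)
    (hdet : 1 ≤ |M.det|) (hM : IsGood ε 0 M) : ∃ p, IsGood ε 0 (shape p) := by
  obtain ⟨Δ, hΔ⟩ : ∃ Δ, Δ = M 0 0 * M 1 1 - M 0 1 * M 1 0 := ⟨_, rfl⟩
  have hdetM : M.det = Δ * M 2 2 := by
    rw [Matrix.det_fin_three, h02, h12, hΔ]; ring
  obtain ⟨hΔ0, h22⟩ : Δ ≠ 0 ∧ M 2 2 ≠ 0 := mul_ne_zero_iff.1 <| hdetM ▸ abs_pos.1 (by linarith)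
  set a := ![M 0 0, Δ / M 0 0, M 2 2]
  set p := (M 0 1 / M 0 0, -(M 0 0 * M 1 0) / Δ, M 2 0 / M 2 2, M 2 1 / M 2 2)
  have hfactor : M = Matrix.diagonal a * shape p := by
    ext i j
    rw [Matrix.diagonal_mul]
    fin_cases i <;> fin_cases j <;> simp [a, p, shape, h02, h12] <;> field_simp
    rw [hΔ]
    ring
  have hprod : ∏ i, a i = M.det := by
    rw [hdetM, Fin.prod_univ_three]
    simp only [a, Matrix.cons_val]
    field_simp
  refine ⟨p, ?_⟩
  rw [hfactor] at hM
  simpa using hM.of_diagonal_mul (a := a) h0 (hprod ▸ hdet)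

theorem isGood_shear_mul {R : Subring (Fin 3 → ℝ)} {V : Matrix (Fin 3) (Fin 3) ℝ} {s : ℝ × ℝ}
    (hV : ∀ w ∈ R, ∃ z : Fin 3 → ℤ, w = V *ᵥ (Int.cast ∘ z)) (hs : bad R ε s = ∅) :
    IsGood ε 0 (shear s * V) := by
  intro r
  have hr : V *ᵥ r ∉ bad R ε s := hs ▸ Set.notMem_empty _
  simp only [bad, Set.mem_ofPred_eq, not_forall, not_le] at hr
  obtain ⟨w, hw, hpos, hlt⟩ := hr
  obtain ⟨z, rfl⟩ := hV w hw
  refine ⟨z, ?_⟩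
  rw [← Matrix.mulVec_mulVec, Matrix.mulVec_add]
  exact ⟨hpos, hlt⟩

end Good

section GoodShape

variable {R : Subring (Fin 3 → ℝ)} {V : Matrix (Fin 3) (Fin 3) ℝ} {ε : ℝ}

theorem exists_slope_bad_eq_empty (hR : IsRealOrder R) (hV : IsUnit V.det) (h20 : V 2 0 ≠ 0)
    (hε : 0 < ε) : ∃ m : Fin 3 → ℤ, IsCoprime (m 1) (m 2) ∧ (V *ᵥ (Int.cast ∘ m)) 2 ≠ 0 ∧
      0 < (shear (slope (V *ᵥ (Int.cast ∘ m))) * V) 0 0 ∧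
      bad R ε (slope (V *ᵥ (Int.cast ∘ m))) = ∅ := by
  obtain ⟨U, hUo, hUd, hU⟩ := exists_isOpen_dense_bad_eq_empty hR hε
  have hopen : IsOpen {s : ℝ × ℝ | 0 < (shear s * V) 0 0} := by
    refine isOpen_lt continuous_const ?_
    simp only [shear, Matrix.mul_apply, Fin.sum_univ_three]
    fun_prop
  have hne : {s : ℝ × ℝ | 0 < (shear s * V) 0 0}.Nonempty := by
    refine ⟨((1 - V 0 0) / V 2 0, 0), ?_⟩
    simp [shear, Matrix.mul_apply, Fin.sum_univ_three, h20]
  obtain ⟨s, hpos, hs⟩ := hUd.inter_open_nonempty _ hopen hne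
  obtain ⟨-, ⟨hpos, hs⟩, v, ⟨⟨m, hm, rfl⟩, hv⟩, rfl⟩ :=
    (dense_slope_image_isCoprime hV).inter_open_nonempty _ (hopen.inter hUo) ⟨s, hpos, hs⟩
  exact ⟨m, hm, hv, hpos, hU _ hs⟩

theorem exists_isGood_shape (hR : IsRealOrder R)
    (hV : ∀ w ∈ R, ∃ z : Fin 3 → ℤ, w = V *ᵥ (Int.cast ∘ z)) (hdet : 1 ≤ |V.det|)
    (h20 : V 2 0 ≠ 0) (hε : 0 < ε) : ∃ p, IsGood ε 0 (shape p) := by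
  have hV0 : IsUnit V.det := (abs_pos.1 (one_pos.trans_le hdet)).isUnit
  obtain ⟨m, ⟨a, b, hab⟩, hv2, hpos, hbad⟩ := exists_slope_bad_eq_empty hR hV0 h20 hε
  set s := slope (V *ᵥ (Int.cast ∘ m))
  set N : Matrix (Fin 3) (Fin 3) ℤ := !![1, 0, m 0; 0, b, m 1; 0, -a, m 2]
  have hN : N.det = 1 := by
    simp only [N, Matrix.det_fin_three, Matrix.of_apply, Matrix.cons_val]
    linear_combination hab
  have hcol : ∀ i, (shear s * V * N.map (Int.cast : ℤ → ℝ)) i 2 =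
      ![0, 0, (V *ᵥ (Int.cast ∘ m)) 2] i := fun i => by
    have hlast : (fun j => N.map (Int.cast : ℤ → ℝ) j 2) = Int.cast ∘ m := by
      ext j; fin_cases j <;> rfl
    have h := shear_slope_add_mulVec hv2 0
    rw [Prod.mk_zero_zero, add_zero, zero_mul] at h
    rw [← h, Matrix.mulVec_mulVec, ← hlast]
    rfl
  refine IsGood.exists_shape ?_ (hcol 0) (hcol 1) ?_
    ((isGood_shear_mul hV hbad).mul_map_intCast (hN ▸ isUnit_one))
  · simpa [N, Matrix.mul_apply (M := shear s * V), Fin.sum_univ_three] using hpos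
  · have hshear : (shear s).det = 1 := by simp [shear, Matrix.det_fin_three]
    rwa [Matrix.det_mul, Matrix.det_mul, ← Int.cast_det, hN, hshear, Int.cast_one, one_mul, mul_one]

theorem IsGood.exists_forall_shape {p : ℝ × ℝ × ℝ × ℝ} (hp : IsGood ε 0 (shape p)) :
    ∃ κ > 0, ∃ U : Set (ℝ × ℝ × ℝ × ℝ), IsOpen U ∧ U.Nonempty ∧ ∀ q ∈ U, IsGood ε κ (shape q) := by
  have hcont : Continuous fun q : ℝ × ℝ × ℝ × ℝ × ℝ => (q.1, shape q.2) :=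
    continuous_fst.prodMk (continuous_shape.comp continuous_snd)
  have hnhds : ∀ᶠ κ in 𝓝 (0 : ℝ), ∀ᶠ q in 𝓝 p, IsGood ε κ (shape q) :=
    (hcont.tendsto (0, p) |>.eventually hp.eventually).curry_nhds
  obtain ⟨κ, hκ, hκpos⟩ := ((hnhds.filter_mono nhdsWithin_le_nhds).and
    (self_mem_nhdsWithin : Set.Ioi (0 : ℝ) ∈ 𝓝[>] 0)).exists
  obtain ⟨U, hU, hUo, hpU⟩ := eventually_nhds_iff.1 hκ
  exact ⟨κ, hκpos, U, hUo, ⟨p, hpU⟩, hU⟩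

end GoodShape

section PolynomialOrder

open Polynomial

variable {n : ℕ} {f : ℤ[X]} {r w : Fin n → ℝ}

/-- The order in a totally real number field generated by an element with conjugates `r`, embedded
by the real places. -/
noncomputable def polynomialOrder (r : Fin n → ℝ) : Subring (Fin n → ℝ) :=
  (aeval r : ℤ[X] →ₐ[ℤ] Fin n → ℝ).range.toSubring

theorem vandermonde_mulVec_mem_polynomialOrder (r : Fin n → ℝ) (z : Fin n → ℤ) :
    Matrix.vandermonde r *ᵥ (Int.cast ∘ z) ∈ polynomialOrder r := by
  refine ⟨∑ j, C (z j) * X ^ (j : ℕ), funext fun i => ?_⟩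
  simp [aeval_pi_apply, Matrix.mulVec, dotProduct, Matrix.vandermonde_apply, mul_comm]

theorem monic_of_map_eq_prod (hf : f.map (Int.castRingHom ℝ) = ∏ i, (X - C (r i))) : f.Monic :=
  monic_of_injective (RingHom.injective_int _) (hf ▸ monic_prod_X_sub_C r Finset.univ)

theorem natDegree_of_map_eq_prod (hf : f.map (Int.castRingHom ℝ) = ∏ i, (X - C (r i))) :
    f.natDegree = n := by
  rw [← natDegree_map_eq_of_injective (RingHom.injective_int (Int.castRingHom ℝ)), hf,
    natDegree_finsetProd_X_sub_C_eq_card, Finset.card_univ, Fintype.card_fin]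

theorem aeval_of_map_eq_prod (hf : f.map (Int.castRingHom ℝ) = ∏ i, (X - C (r i))) (i : Fin n) :
    aeval (r i) f = 0 := by
  rw [aeval_def, eval₂_eq_eval_map, algebraMap_int_eq, hf, eval_prod]
  exact Finset.prod_eq_zero (Finset.mem_univ i) (by simp)

theorem exists_eq_vandermonde_mulVec (hf : f.map (Int.castRingHom ℝ) = ∏ i, (X - C (r i)))
    (hw : w ∈ polynomialOrder r) :
    ∃ z : Fin n → ℤ, w = Matrix.vandermonde r *ᵥ (Int.cast ∘ z) := by
  obtain ⟨p, rfl⟩ := hw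
  have hmonic := monic_of_map_eq_prod hf
  refine ⟨fun j => (p %ₘ f).coeff j, funext fun i => ?_⟩
  have hdeg : (p %ₘ f).degree < n := by
    rw [← natDegree_of_map_eq_prod hf, ← degree_eq_natDegree hmonic.ne_zero]
    exact degree_modByMonic_lt p hmonic
  calc aeval r p i = aeval (r i) (p %ₘ f) := by
        rw [aeval_pi_apply₂, aeval_modByMonic_eq_self_of_root (aeval_of_map_eq_prod hf i)]
    _ = ∑ j : Fin n, ((p %ₘ f).coeff j : ℝ) * r i ^ (j : ℕ) := by
        rw [aeval_def, eval₂_eq_sum, ← sum_fin _ (by simp) hdeg, algebraMap_int_eq]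
        rfl
    _ = _ := Finset.sum_congr rfl fun j _ => mul_comm _ _

theorem prod_aeval_eq_resultant (hf : f.map (Int.castRingHom ℝ) = ∏ i, (X - C (r i))) (p : ℤ[X]) :
    ∏ i, aeval (r i) p = f.resultant p := by
  have hmap := resultant_map_map f p f.natDegree p.natDegree (Int.castRingHom ℝ)
  have hdeg : (p.map (Int.castRingHom ℝ)).natDegree ≤ p.natDegree := natDegree_map_le
  have hlead : ∏ i, (X - C (r i)).leadingCoeff ≠ 0 := by simp
  rw [← eq_intCast (Int.castRingHom ℝ), ← hmap,
    ← natDegree_map_eq_of_injective (RingHom.injective_int (Int.castRingHom ℝ)) f, hf,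
    resultant_prod_left _ _ _ _ hlead hdeg]
  refine Finset.prod_congr rfl fun i _ => ?_
  rw [natDegree_X_sub_C, resultant_X_sub_C_left _ _ _ hdeg, aeval_def, eval₂_eq_eval_map,
    algebraMap_int_eq]

theorem dvd_of_aeval_eq_zero {A S : Type*} [CommRing A] [IsDomain A] [IsIntegrallyClosed A]
    [CommRing S] [IsDomain S] [Algebra A S] [Module.IsTorsionFree A S] {f p : A[X]} {a : S}
    (hirr : Irreducible f) (hmonic : f.Monic) (ha : aeval a f = 0) (hp : aeval a p = 0) :
    f ∣ p := by
  have hint : IsIntegral A a := ⟨f, hmonic, ha⟩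
  have hmin : minpoly A a = f := by
    obtain h | h := hirr.dvd_iff.1 (minpoly.isIntegrallyClosed_dvd hint ha)
    · exact absurd h (minpoly.not_isUnit A a)
    · exact (eq_of_monic_of_associated hmonic (minpoly.monic hint) h).symm
  exact hmin ▸ minpoly.isIntegrallyClosed_dvd hint hp

theorem one_le_abs_prod_of_mem_polynomialOrder (hirr : Irreducible f)
    (hf : f.map (Int.castRingHom ℝ) = ∏ i, (X - C (r i))) (hw : w ∈ polynomialOrder r)
    (hw0 : w ≠ 0) : 1 ≤ |∏ i, w i| := by
  obtain ⟨p, rfl⟩ := hw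
  have hres : ∏ i, (aeval r p : Fin n → ℝ) i = f.resultant p := by
    simp only [aeval_pi_apply₂, prod_aeval_eq_resultant hf]
  have hne : f.resultant p ≠ 0 := fun h => hw0 <| by
    obtain ⟨i, -, hi⟩ := Finset.prod_eq_zero_iff.1 (hres.trans (by rw [h, Int.cast_zero]))
    rw [aeval_pi_apply₂] at hi
    obtain ⟨q, rfl⟩ := dvd_of_aeval_eq_zero hirr (monic_of_map_eq_prod hf)
      (aeval_of_map_eq_prod hf i) hi
    ext j
    simp [aeval_pi_apply₂, aeval_of_map_eq_prod hf j]
  change 1 ≤ |∏ i, (aeval r p : Fin n → ℝ) i|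
  rw [hres]
  exact_mod_cast Int.one_le_abs hne

theorem exists_mem_polynomialOrder_norm_sub_le (hr : Function.Injective r) :
    ∃ C, ∀ v : Fin n → ℝ, ∃ w ∈ polynomialOrder r, ‖v - w‖ ≤ C := by
  have hdet : IsUnit (Matrix.vandermonde r).det :=
    (Matrix.det_vandermonde_ne_zero_iff.2 hr).isUnit
  set L := (Matrix.mulVecLin (Matrix.vandermonde r)).toContinuousLinearMap
  refine ⟨‖L‖, fun v => ⟨_, vandermonde_mulVec_mem_polynomialOrder r
    fun j => round (((Matrix.vandermonde r)⁻¹ *ᵥ v) j), ?_⟩⟩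
  set t := (Matrix.vandermonde r)⁻¹ *ᵥ v
  have hv : v = Matrix.vandermonde r *ᵥ t := by
    rw [Matrix.mulVec_mulVec, Matrix.mul_nonsing_inv _ hdet, Matrix.one_mulVec]
  nth_rw 1 [hv]
  rw [← Matrix.mulVec_sub]
  refine (L.le_opNorm _).trans (mul_le_of_le_one_right (norm_nonneg _) ?_)
  exact (pi_norm_le_iff_of_nonneg zero_le_one).2 fun j =>
    (abs_sub_round (t j)).trans (by norm_num)

end PolynomialOrder

section Cubic

open Polynomial

/-- The minimal polynomial of `2 * cos (2 * π / 7)`, generating a cyclic totally real cubic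
field. -/
noncomputable def cubic : ℤ[X] := X ^ 3 + X ^ 2 - 2 * X - 1

/-- The conjugates of `2 * cos (2 * π / 7)`, numbered so that `x ↦ x ^ 2 - 2` is the shift by
one. -/
noncomputable def cubicRoot : Fin 3 → ℝ :=
  ![2 * Real.cos (2 * Real.pi / 7), 2 * Real.cos (4 * Real.pi / 7), 2 * Real.cos (8 * Real.pi / 7)]

theorem irreducible_cubic : Irreducible cubic := by
  have hmonic : cubic.Monic := by unfold cubic; monicity!
  have hdeg : cubic.natDegree = 3 := by unfold cubic; compute_degree!
  refine hmonic.irreducible_of_irreducible_map (Int.castRingHom (ZMod 2)) _ ?_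
  rw [(hmonic.map _).irreducible_iff_roots_eq_zero_of_degree_le_three
    (by rw [hmonic.natDegree_map, hdeg]; norm_num) (by rw [hmonic.natDegree_map, hdeg])]
  refine Multiset.eq_zero_of_forall_notMem fun a ha => ?_
  have hroot := (mem_roots'.1 ha).2
  simp only [cubic, IsRoot.def, Polynomial.map_sub, Polynomial.map_add, Polynomial.map_pow, map_X,
    Polynomial.map_mul, Polynomial.map_ofNat, Polynomial.map_one, eval_sub, eval_add, eval_pow,
    eval_X, eval_mul, eval_ofNat, eval_one] at hroot
  clear ha
  revert a
  decide

theorem cubicRoot_add_one (i : Fin 3) : cubicRoot (i + 1) = cubicRoot i ^ 2 - 2 := by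
  have hdouble (x : ℝ) : 2 * Real.cos (2 * x) = (2 * Real.cos x) ^ 2 - 2 := by
    rw [Real.cos_two_mul]; ring
  fin_cases i
  · change 2 * Real.cos (4 * Real.pi / 7) = (2 * Real.cos (2 * Real.pi / 7)) ^ 2 - 2
    rw [← hdouble]; ring_nf
  · change 2 * Real.cos (8 * Real.pi / 7) = (2 * Real.cos (4 * Real.pi / 7)) ^ 2 - 2
    rw [← hdouble]; ring_nf
  · change 2 * Real.cos (2 * Real.pi / 7) = (2 * Real.cos (8 * Real.pi / 7)) ^ 2 - 2
    rw [← hdouble, ← Real.cos_add_two_pi]; ring_nf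

theorem cubicRoot_zero_pos : 0 < cubicRoot 0 := by
  have := Real.pi_pos
  exact mul_pos two_pos (Real.cos_pos_of_mem_Ioo ⟨by linarith, by linarith⟩)

theorem cubicRoot_neg {i : Fin 3} (hi : i ≠ 0) : cubicRoot i < 0 := by
  have := Real.pi_pos
  fin_cases i
  · exact absurd rfl hi
  · exact mul_neg_of_pos_of_neg two_pos
      (Real.cos_neg_of_pi_div_two_lt_of_lt (by linarith) (by linarith))
  · exact mul_neg_of_pos_of_neg two_pos
      (Real.cos_neg_of_pi_div_two_lt_of_lt (by linarith) (by linarith))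

theorem cubic_cubicRoot_zero : cubicRoot 0 ^ 3 + cubicRoot 0 ^ 2 - 2 * cubicRoot 0 - 1 = 0 := by
  have hpi := Real.pi_pos
  set x := 2 * Real.pi / 7 with hx
  have hcos : Real.cos (2 * (2 * x)) = Real.cos (3 * x) := by
    rw [← Real.cos_neg, ← Real.cos_add_two_pi]
    exact congrArg Real.cos (by ring)
  rw [Real.cos_two_mul, Real.cos_two_mul, Real.cos_three_mul] at hcos
  have hne : Real.cos x ≠ 1 := by
    rw [Ne, Real.cos_eq_one_iff_of_lt_of_lt] <;> linarith
  refine (mul_eq_zero.1 ?_).resolve_left (sub_ne_zero.2 hne)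
  change _ * ((2 * Real.cos x) ^ 3 + (2 * Real.cos x) ^ 2 - 2 * (2 * Real.cos x) - 1) = 0
  linear_combination hcos

theorem cubicRoot_two : cubicRoot 2 = 1 - cubicRoot 0 - cubicRoot 0 ^ 2 := by
  have h1 : cubicRoot 1 = cubicRoot 0 ^ 2 - 2 := cubicRoot_add_one 0
  have h2 : cubicRoot 2 = cubicRoot 1 ^ 2 - 2 := cubicRoot_add_one 1
  rw [h2, h1]
  linear_combination (cubicRoot 0 - 1) * cubic_cubicRoot_zero

theorem map_cubic : cubic.map (Int.castRingHom ℝ) = ∏ i, (X - C (cubicRoot i)) := by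
  have h1 : cubicRoot 1 = cubicRoot 0 ^ 2 - 2 := cubicRoot_add_one 0
  rw [Fin.prod_univ_three, h1, cubicRoot_two, cubic]
  have hC := congrArg C cubic_cubicRoot_zero
  simp only [map_sub, map_add, map_mul, map_pow, map_one, map_zero, map_ofNat] at hC
  simp only [Polynomial.map_sub, Polynomial.map_add, Polynomial.map_mul, Polynomial.map_pow,
    map_X, Polynomial.map_one, Polynomial.map_ofNat, map_sub, map_pow, map_one, map_ofNat]
  linear_combination (C (cubicRoot 0) * X + 1 - C (cubicRoot 0) ^ 2) * hC

theorem cubic_cubicRoot (i : Fin 3) :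
    cubicRoot i ^ 3 + cubicRoot i ^ 2 - 2 * cubicRoot i - 1 = 0 := by
  simpa [cubic, map_ofNat] using aeval_of_map_eq_prod map_cubic i

theorem one_add_cubicRoot_mul (i : Fin 3) : (1 + cubicRoot i) * (2 - cubicRoot i ^ 2) = 1 := by
  linear_combination -cubic_cubicRoot i

theorem sq_one_add_cubicRoot_lt_one {i : Fin 3} (hi : i ≠ 0) : (1 + cubicRoot i) ^ 2 < 1 := by
  have hle : -2 ≤ cubicRoot i := by
    fin_cases i <;> refine le_mul_of_le_mul_of_nonneg_left ?_ (Real.neg_one_le_cos _) two_pos.le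
    all_goals norm_num
  have hne : cubicRoot i ≠ -2 := fun h => by
    have := cubic_cubicRoot i
    norm_num [h] at this
  rw [sq_lt_one_iff_abs_lt_one, abs_lt]
  constructor <;> linarith [cubicRoot_neg hi, hle.lt_of_ne' hne]

theorem det_vandermonde_cubicRoot : (Matrix.vandermonde cubicRoot).det = -7 := by
  have h1 : cubicRoot 1 = cubicRoot 0 ^ 2 - 2 := cubicRoot_add_one 0
  simp only [Matrix.det_fin_three, Matrix.vandermonde_apply, h1, cubicRoot_two, Fin.val_zero,
    Fin.val_one, Fin.val_two]
  linear_combination (2 * cubicRoot 0 ^ 3 + cubicRoot 0 ^ 2 - 9 * cubicRoot 0 - 1) *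
    cubic_cubicRoot_zero

theorem cubicRoot_comp_add_mem (k : Fin 3) :
    (fun i => cubicRoot (i + k)) ∈ polynomialOrder cubicRoot := by
  have hsucc (k : Fin 3) (hk : (fun i => cubicRoot (i + k)) ∈ polynomialOrder cubicRoot) :
      (fun i => cubicRoot (i + (k + 1))) ∈ polynomialOrder cubicRoot := by
    have : (fun i => cubicRoot (i + (k + 1))) = (fun i => cubicRoot (i + k)) ^ 2 - 2 :=
      funext fun i => by rw [← add_assoc, cubicRoot_add_one]; rfl
    exact this ▸ sub_mem (pow_mem hk 2) (ofNat_mem _ 2)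
  have h0 : (fun i => cubicRoot (i + 0)) ∈ polynomialOrder cubicRoot := ⟨X, by simp⟩
  fin_cases k
  exacts [h0, hsucc 0 h0, hsucc 1 (hsucc 0 h0)]

theorem isCongrUnit_cubic (k : Fin 3) :
    IsCongrUnit (polynomialOrder cubicRoot) 1 fun i => (1 + cubicRoot (i + k)) ^ 2 := by
  have hmem := cubicRoot_comp_add_mem k
  have hpow : (fun i => (1 + cubicRoot (i + k)) ^ 2) = (1 + fun i => cubicRoot (i + k)) ^ 2 := rfl
  refine ⟨fun i => ?_, ?_, _, sub_mem (hpow ▸ pow_mem (add_mem (one_mem _) hmem) 2) (one_mem _), ?_⟩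
  · have := one_add_cubicRoot_mul (i + k)
    exact sq_pos_of_ne_zero (left_ne_zero_of_mul_eq_one this)
  · have hinv : (fun i => (1 + cubicRoot (i + k)) ^ 2)⁻¹ =
        (2 - (fun i => cubicRoot (i + k)) ^ 2) ^ 2 := funext fun i => by
      rw [Pi.inv_apply, ← inv_pow, inv_eq_of_mul_eq_one_right (one_add_cubicRoot_mul (i + k))]
      rfl
    exact hinv ▸ pow_mem (sub_mem (ofNat_mem _ 2) (pow_mem hmem 2)) 2
  · simp

theorem isRealOrder_cubic : IsRealOrder (polynomialOrder cubicRoot) where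
  exists_norm_sub_le := exists_mem_polynomialOrder_norm_sub_le <|
    Matrix.det_vandermonde_ne_zero_iff.1 (by norm_num [det_vandermonde_cubicRoot])
  one_le_abs_prod _ := one_le_abs_prod_of_mem_polynomialOrder irreducible_cubic map_cubic
  exists_unit i := by
    refine ⟨_, isCongrUnit_cubic (-i), ?_, fun j hj => ?_⟩
    · rw [add_neg_cancel]
      exact one_lt_pow₀ (by linarith [cubicRoot_zero_pos]) two_ne_zero
    · exact sq_one_add_cubicRoot_lt_one (by rwa [← sub_eq_add_neg, sub_ne_zero])

theorem exists_forall_isGood_shape {ε : ℝ} (hε : 0 < ε) :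
    ∃ κ > 0, ∃ U : Set (ℝ × ℝ × ℝ × ℝ), IsOpen U ∧ U.Nonempty ∧ ∀ q ∈ U, IsGood ε κ (shape q) := by
  obtain ⟨p, hp⟩ := exists_isGood_shape isRealOrder_cubic
    (fun w => exists_eq_vandermonde_mulVec map_cubic) (by norm_num [det_vandermonde_cubicRoot])
    (by simp [Matrix.vandermonde_apply]) hε
  exact hp.exists_forall_shape

end Cubic

section LebesgueDensity

theorem ae_mem_of_frequently_closedBall_subset {E : Type*} [NormedAddCommGroup E]
    [NormedSpace ℝ E] [FiniteDimensional ℝ E] [MeasurableSpace E] [BorelSpace E] (μ : Measure E)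
    [μ.IsAddHaarMeasure] {S : Set E} {c : ℝ} (hc : 0 < c)
    (h : ∀ᵐ x ∂μ, ∃ᶠ ρ in 𝓝[>] (0 : ℝ), ∃ y,
      Metric.closedBall y (c * ρ) ⊆ S ∩ Metric.closedBall x ρ) : ∀ᵐ x ∂μ, x ∈ S := by
  set t := ENNReal.ofReal (c ^ Module.finrank ℝ E)
  have ht : 0 < t := ENNReal.ofReal_pos.2 (pow_pos hc _)
  have hfalse : ∀ᵐ _ ∂μ.restrict Sᶜ, False := by
    filter_upwards [Besicovitch.ae_tendsto_measure_inter_div μ Sᶜ, ae_restrict_of_ae h]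
      with x hx hxS
    have hlt : ∀ᶠ ρ in 𝓝[>] (0 : ℝ), 1 - t < μ (Sᶜ ∩ Metric.closedBall x ρ) /
        μ (Metric.closedBall x ρ) :=
      hx.eventually_const_lt (ENNReal.sub_lt_self (by simp) (by simp) ht.ne')
    obtain ⟨ρ, ⟨⟨y, hy⟩, hρ⟩, hρ0⟩ := ((hxS.and_eventually hlt).and_eventually
      (self_mem_nhdsWithin : Set.Ioi (0 : ℝ) ∈ 𝓝[>] 0)).exists
    have hρ0 : 0 < ρ := hρ0
    refine hρ.not_ge (ENNReal.div_le_of_le_mul ?_)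
    have hsub : Sᶜ ∩ Metric.closedBall x ρ ⊆ Metric.closedBall x ρ \ Metric.closedBall y (c * ρ) :=
      fun z hz => ⟨hz.2, fun hzy => hz.1 (hy hzy).1⟩
    refine (measure_mono hsub).trans_eq ?_
    rw [measure_sdiff (fun z hz => (hy hz).2) measurableSet_closedBall.nullMeasurableSet
      measure_closedBall_lt_top.ne, Measure.addHaar_closedBall_mul μ y hc.le hρ0.le,
      ← Measure.addHaar_closedBall_center μ x,
      ENNReal.sub_mul (fun _ _ => measure_closedBall_lt_top.ne), one_mul]
  rwa [eventually_false_iff_eq_bot, ae_eq_bot, Measure.restrict_eq_zero] at hfalse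

end LebesgueDensity

section RationalApproximation

theorem frequently_exists_rat_abs_sub_le {x : ℝ} (hx : Irrational x) :
    ∃ᶠ Q : ℕ in atTop, ∃ q : ℚ, q.den = Q ∧ |x - q| ≤ 1 / (Q : ℝ) ^ 2 := by
  refine frequently_atTop'.2 fun B => ?_
  obtain ⟨δ, hδ, hδpos⟩ : ∃ δ, (∀ q : ℚ, q.den ≤ B → δ ≤ dist x q) ∧ 0 < δ :=
    (((hx.eventually_forall_le_dist_cast_rat_of_den_le B).filter_mono nhdsWithin_le_nhds).and
      (self_mem_nhdsWithin : Set.Ioi (0 : ℝ) ∈ 𝓝[>] 0)).exists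
  obtain ⟨n, hn⟩ := exists_nat_one_div_lt hδpos
  obtain ⟨q, hq, hqn⟩ := Real.exists_rat_abs_sub_le_and_den_le x n.succ_pos
  have hden : (1 : ℝ) ≤ q.den := by exact_mod_cast q.den_pos
  have hqn' : (q.den : ℝ) ≤ (n.succ : ℕ) := by exact_mod_cast hqn
  push_cast at hq hqn'
  refine ⟨q.den, ?_, q, rfl, hq.trans ?_⟩
  · by_contra! hle
    have := (hδ q hle).trans hq
    have : 1 / ((n + 1 + 1) * q.den : ℝ) ≤ 1 / (n + 1) := by
      gcongr; nlinarith
    linarith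
  · gcongr; nlinarith

theorem exists_rat_abs_sub_lt_and_one_div_den_sq_lt (x : ℝ) {δ : ℝ} (hδ : 0 < δ) :
    ∃ q : ℚ, |x - q| < δ ∧ 1 / (q.den : ℝ) ^ 2 < δ := by
  obtain ⟨y, hy, hxy⟩ := dense_irrational.exists_dist_lt x (half_pos hδ)
  obtain ⟨_, ⟨q, rfl, hq⟩, hδq⟩ := ((frequently_exists_rat_abs_sub_le hy).and_eventually
    (tendsto_natCast_atTop_atTop.eventually_gt_atTop (2 / δ))).exists
  have hden : (1 : ℝ) ≤ q.den := by exact_mod_cast q.den_pos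
  have hsmall : 1 / (q.den : ℝ) ^ 2 < δ / 2 := by
    rw [div_lt_iff₀ hδ] at hδq
    rw [div_lt_iff₀ (by positivity)]
    nlinarith
  refine ⟨q, ?_, by linarith⟩
  linarith [dist_triangle x y q, Real.dist_eq x q, Real.dist_eq y q]

theorem exists_mul_sub_mul_eq_one {u v : ℤ} (hv : 0 < v) (h : IsCoprime u v) :
    ∃ m k : ℤ, m * u - k * v = 1 ∧ 0 ≤ m ∧ m ≤ v := by
  obtain ⟨a, b, hab⟩ := h
  refine ⟨a % v, -(b + a / v * u), ?_, Int.emod_nonneg _ hv.ne', (Int.emod_lt_of_pos _ hv).le⟩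
  linear_combination hab + u * Int.emod_add_mul_ediv a v

theorem abs_div_sub_div_le_inv_sq {c d k m Q : ℤ} (hm : 0 < m) (hQ : 0 < Q) (hc : Q * m ≤ c)
    (h : |d * m - c * k| ≤ Q) : |(d / c - k / m : ℝ)| ≤ 1 / (m : ℝ) ^ 2 := by
  have hc0 : 0 < c := (mul_pos hQ hm).trans_le hc
  have hnum : |d * m - c * k| * m ≤ c := (mul_le_mul_of_nonneg_right h hm.le).trans hc
  have hnum' : |(d * m - c * k : ℝ)| * m ≤ c := mod_cast hnum
  have hmR : (0 : ℝ) < m := mod_cast hm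
  have hcR : (0 : ℝ) < c := mod_cast hc0
  rw [div_sub_div _ _ hcR.ne' hmR.ne', abs_div, abs_of_pos (mul_pos hcR hmR),
    div_le_div_iff₀ (by positivity) (by positivity)]
  linear_combination (m : ℝ) * hnum'

theorem exists_det_eq_one_near_rat (p k : ℚ) :
    ∃ c d a b : ℤ, a * d - b * c = 1 ∧ (p.den : ℤ) ≤ c ∧ c ≤ 2 * k.den * p.den ∧
      |(d / c - k : ℝ)| ≤ 1 / (k.den : ℝ) ^ 2 ∧ |(a / c - p : ℝ)| ≤ 1 / (p.den : ℝ) ^ 2 := by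
  have hcop (q : ℚ) : IsCoprime q.num q.den := Int.isCoprime_iff_gcd_eq_one.2 q.reduced
  have hp : (0 : ℤ) < p.den := mod_cast p.den_pos
  have hk : (0 : ℤ) < k.den := mod_cast k.den_pos
  obtain ⟨m, k', hmk, hm0, hm1⟩ := exists_mul_sub_mul_eq_one hk (hcop k)
  obtain ⟨l, p', hlp, hl0, hl1⟩ := exists_mul_sub_mul_eq_one hp (hcop p).neg_left
  have hc : (p.den * k.den : ℤ) ≤ l * m + p.den * k.den := by linarith [mul_nonneg hl0 hm0]
  refine ⟨l * m + p.den * k.den, l * k' + p.den * k.num, -p' * m + p.num * k.den,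
    -p' * k' + p.num * k.num, ?_, by nlinarith, by nlinarith, ?_, ?_⟩
  · linear_combination (-l * p.num - p' * p.den) * hmk + hlp
  · have hnum : (l * k' + p.den * k.num) * k.den - (l * m + p.den * k.den) * k.num = -l := by
      linear_combination -l * hmk
    have habs := abs_div_sub_div_le_inv_sq hk hp hc (by rwa [hnum, abs_neg, abs_of_nonneg hl0])
    rwa [Int.cast_natCast, ← Rat.cast_def] at habs
  · have hnum : (-p' * m + p.num * k.den) * p.den - (l * m + p.den * k.den) * p.num = m := by
      linear_combination m * hlp
    have habs := abs_div_sub_div_le_inv_sq hp hk ((mul_comm _ _).trans_le hc)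
      (by rwa [hnum, abs_of_nonneg hm0])
    rwa [Int.cast_natCast, ← Rat.cast_def] at habs

end RationalApproximation

section Equidistribution

theorem exists_forall_abs_mul_add_sub_lt {x δ : ℝ} (hx : Irrational x) (hδ : 0 < δ) :
    ∃ K : ℕ, ∀ t : ℝ, ∃ j m : ℤ, |j| ≤ K ∧ |j * x + t - m| < δ := by
  have hdense : Dense (AddSubgroup.closure {x, 1} : Set ℝ) :=
    dense_addSubgroupClosure_pair_iff.2 (by rwa [div_one])
  set S : ℕ → Set ℝ := fun K => {t | ∃ j m : ℤ, |j| ≤ K ∧ |j * x + t - m| < δ}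
  have hopen (K) : IsOpen (S K) := by
    simp only [S, Set.ofPred_exists, Set.ofPred_and]
    exact isOpen_iUnion fun j => isOpen_iUnion fun m =>
      isOpen_const.inter (isOpen_lt (by fun_prop) continuous_const)
  have hmono : Monotone S := fun K L hKL t ⟨j, m, hj, h⟩ => ⟨j, m, hj.trans (mod_cast hKL), h⟩
  have hcover : Set.Icc (0 : ℝ) 1 ⊆ ⋃ K, S K := fun t _ => by
    obtain ⟨y, hy, hty⟩ := hdense.exists_dist_lt (-t) hδ
    obtain ⟨j, m, rfl⟩ := AddSubgroup.mem_closure_pair.1 hy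
    refine Set.mem_iUnion.2 ⟨j.natAbs, j, -m, by simp, ?_⟩
    rw [Real.dist_eq, abs_sub_comm] at hty
    convert hty using 2
    simp
    ring
  obtain ⟨K, hK⟩ := isCompact_Icc.elim_directed_cover S hopen hcover hmono.directed_le
  refine ⟨K, fun t => ?_⟩
  obtain ⟨j, m, hj, h⟩ := hK ⟨Int.fract_nonneg t, (Int.fract_lt_one t).le⟩
  refine ⟨j, m + ⌊t⌋, hj, ?_⟩
  convert h using 2
  rw [Int.fract]
  push_cast
  ring

end Equidistribution

section Recurrence

theorem abs_mul_sub_lt_and_abs_sub_le {a c k p y θ Q δ : ℝ} (hδ : 0 < δ) (hQ : 0 < Q)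
    (hQc : Q ≤ c) (ha : |a / c - p| ≤ 1 / Q ^ 2) (hy : |y - p| ≤ 1 / Q ^ 2)
    (hθ : |θ - (a / c - k / c ^ 2)| ≤ δ / 2 / c ^ 2) :
    |c * (a - c * θ) - k| < δ ∧ |θ - y| ≤ (2 + |k| + δ) / Q ^ 2 := by
  have hc : 0 < c := hQ.trans_le hQc
  have hsq : 1 / c ^ 2 ≤ 1 / Q ^ 2 := by gcongr
  constructor
  · have hscale : c * (a - c * θ) - k = -(c ^ 2 * (θ - (a / c - k / c ^ 2))) := by
      field_simp; ring
    rw [hscale, abs_neg, abs_mul, abs_of_pos (by positivity), mul_comm]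
    linarith [(le_div_iff₀ (by positivity)).1 hθ]
  · have hk : |k / c ^ 2| = |k| * (1 / c ^ 2) := by
      rw [abs_div, abs_of_pos (by positivity : 0 < c ^ 2), mul_one_div]
    have hsplit : θ - y = (θ - (a / c - k / c ^ 2)) - k / c ^ 2 + (a / c - p) - (y - p) := by ring
    calc |θ - y| ≤ |θ - (a / c - k / c ^ 2)| + |k / c ^ 2| + |a / c - p| + |y - p| := by
          rw [hsplit]
          exact (abs_sub _ _).trans (by grw [abs_add_le, abs_sub])
      _ ≤ δ / 2 * (1 / Q ^ 2) + |k| * (1 / Q ^ 2) + 1 / Q ^ 2 + 1 / Q ^ 2 := by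
          rw [hk]
          gcongr
          exact hθ.trans (by rw [div_eq_mul_one_div (δ / 2)]; gcongr)
      _ ≤ (2 + |k| + δ) * (1 / Q ^ 2) := by
          linarith [mul_pos hδ (by positivity : 0 < 1 / Q ^ 2)]
      _ = (2 + |k| + δ) / Q ^ 2 := mul_one_div _ _

theorem ae_exists_det_eq_one_near (x k : ℝ) {δ : ℝ} (hδ : 0 < δ) (B : ℕ) :
    ∀ᵐ θ : ℝ, ∃ c : ℤ, B ≤ c ∧ ∃ d a b : ℤ,
      a * d - b * c = 1 ∧ |(d / c : ℝ) - x| < δ ∧ |c * (a - c * θ) - k| < δ := by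
  obtain ⟨s, hxs, hs⟩ := exists_rat_abs_sub_lt_and_one_div_den_sq_lt x (half_pos hδ)
  have : (0 : ℝ) < s.den := mod_cast s.den_pos
  set D := 2 + |k| + δ
  have hD : 0 < D := by positivity
  refine ae_mem_of_frequently_closedBall_subset volume (c := δ / (8 * s.den ^ 2 * D))
    (by positivity) ?_
  have hirr : ∀ᵐ y : ℝ, Irrational y := (Set.countable_range ((↑) : ℚ → ℝ)).ae_notMem volume
  filter_upwards [hirr] with y hy
  have htendsto : Tendsto (fun Q : ℕ => D / (Q : ℝ) ^ 2) atTop (𝓝[>] 0) := by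
    refine tendsto_nhdsWithin_iff.2 ⟨tendsto_const_nhds.div_atTop
      ((tendsto_pow_atTop two_ne_zero).comp tendsto_natCast_atTop_atTop), ?_⟩
    filter_upwards [eventually_gt_atTop 0] with Q hQ
    exact div_pos hD (by positivity)
  refine htendsto.frequently (((frequently_exists_rat_abs_sub_le hy).and_eventually
    (eventually_ge_atTop B)).mono ?_)
  rintro _ ⟨⟨p, rfl, hp⟩, hB⟩
  obtain ⟨c, d, a, b, hdet, hpc, hcp, hd, ha⟩ := exists_det_eq_one_near_rat p s
  have hp0 : (0 : ℝ) < p.den := mod_cast p.den_pos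
  have hpcR : (p.den : ℝ) ≤ c := mod_cast hpc
  have hcpR : (c : ℝ) ≤ 2 * s.den * p.den := mod_cast hcp
  have hc0 : (0 : ℝ) < c := hp0.trans_le hpcR
  have hradius : δ / (8 * s.den ^ 2 * D) * (D / p.den ^ 2) ≤ δ / 2 / c ^ 2 := by
    calc δ / (8 * s.den ^ 2 * D) * (D / p.den ^ 2) = δ / 2 / (2 * s.den * p.den) ^ 2 := by
          field_simp; norm_num
      _ ≤ δ / 2 / c ^ 2 := by gcongr
  refine ⟨a / c - k / c ^ 2, fun θ hθ => ?_⟩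
  obtain ⟨hak, hθy⟩ := abs_mul_sub_lt_and_abs_sub_le hδ hp0 hpcR ha hp
    ((Metric.mem_closedBall.1 hθ).trans hradius)
  refine ⟨⟨c, by lia, d, a, b, hdet, ?_, hak⟩, hθy⟩
  linarith [abs_sub_le (d / c : ℝ) s x, abs_sub_comm (s : ℝ) x]

theorem exists_mul_sub_eq_and_abs_lt {x δ : ℝ} {K : ℕ}
    (hK : ∀ t : ℝ, ∃ j m : ℤ, |j| ≤ K ∧ |j * x + t - m| < δ) {c d : ℝ} (hc : 0 < c)
    (hcd : K * |d / c - x| ≤ δ) (θ χ₀ χ₁ : ℝ) : ∃ y : ℝ, ∃ n n' : ℤ,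
      |y - θ| ≤ (K + 1) / c ∧ c * y - n = χ₀ ∧ |d * y - n' - χ₁| < 2 * δ := by
  set n := ⌊c * θ - χ₀⌋
  obtain ⟨j, n', hj, hn'⟩ := hK ((n + χ₀) * (d / c) - χ₁)
  have hjR : |(j : ℝ)| ≤ K := mod_cast hj
  refine ⟨(n + j + χ₀) / c, n + j, n', ?_, ?_, ?_⟩
  · have hn : |(n : ℝ) + χ₀ - c * θ| ≤ 1 := by
      rw [abs_le]
      constructor <;> linarith [Int.floor_le (c * θ - χ₀), Int.lt_floor_add_one (c * θ - χ₀)]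
    have hy : (n + j + χ₀) / c - θ = (j + (n + χ₀ - c * θ)) / c := by field_simp; ring
    rw [hy, abs_div, abs_of_pos hc]
    gcongr
    exact (abs_add_le _ _).trans (add_le_add hjR hn)
  · push_cast
    field_simp
    ring
  · have hsplit : d * ((n + j + χ₀) / c) - n' - χ₁ =
        (j * x + ((n + χ₀) * (d / c) - χ₁) - n') + j * (d / c - x) := by
      field_simp; ring
    have hjx : |j * (d / c - x)| ≤ δ := by
      rw [abs_mul]
      exact (mul_le_mul_of_nonneg_right hjR (abs_nonneg _)).trans hcd
    rw [hsplit]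
    linarith [abs_add_le (j * x + ((n + χ₀) * (d / c) - χ₁) - n') (j * (d / c - x))]

theorem ae_forall_nhds_frequently (x k : ℝ) :
    ∀ᵐ θ : ℝ, ∀ V ∈ 𝓝 (x, k), ∃ᶠ c : ℤ in atTop, ∃ d a b : ℤ,
      a * d - b * c = 1 ∧ ((d / c : ℝ), c * (a - c * θ)) ∈ V := by
  have hall : ∀ᵐ θ : ℝ, ∀ m B : ℕ, ∃ c : ℤ, B ≤ c ∧ ∃ d a b : ℤ,
      a * d - b * c = 1 ∧ |(d / c : ℝ) - x| < 1 / (m + 1) ∧ |c * (a - c * θ) - k| < 1 / (m + 1) :=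
    ae_all_iff.2 fun m => ae_all_iff.2 fun B => ae_exists_det_eq_one_near x k (by positivity) B
  filter_upwards [hall] with θ hθ V hV
  obtain ⟨δ, hδ, hV⟩ := Metric.mem_nhds_iff.1 hV
  obtain ⟨m, hm⟩ := exists_nat_one_div_lt hδ
  refine frequently_atTop.2 fun B => ?_
  obtain ⟨c, hc, d, a, b, hdet, hd, ha⟩ := hθ m B.toNat
  exact ⟨c, by lia, d, a, b, hdet, hV (max_lt (hd.trans hm) (ha.trans hm))⟩

/-- The matrix sending `(q, p₁, p₂)` to `(q, q * θ₁ - p₁, q * θ₂ - p₂)`. -/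
def approxMatrix (θ : ℝ × ℝ) : Matrix (Fin 3) (Fin 3) ℝ :=
  !![1, 0, 0; θ.1, -1, 0; θ.2, 0, -1]

/-- The coordinates, with respect to `shape`, of the lattice spanned by the columns of
`approxMatrix θ` once it is moved by `diag(c⁻¹, c, 1)`, in the basis given by the integers
`c, d, a, n, n'`. -/
noncomputable def returnShape (θ : ℝ × ℝ) (c d a n n' : ℤ) : ℝ × ℝ × ℝ × ℝ :=
  (d / c, c * (a - c * θ.1), c * θ.2 - n, d * θ.2 - n')

/-- The pairs whose lattice returns to `shape '' U` at some time `c ≥ B`. -/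
def returnSet (U : Set (ℝ × ℝ × ℝ × ℝ)) (B : ℤ) : Set (ℝ × ℝ) :=
  {θ | ∃ c ≥ B, ∃ d a b n n' : ℤ, a * d - b * c = 1 ∧ returnShape θ c d a n n' ∈ U}

variable {U : Set (ℝ × ℝ × ℝ × ℝ)}

theorem isOpen_returnSet (hU : IsOpen U) (B : ℤ) : IsOpen (returnSet U B) := by
  simp only [returnSet, Set.ofPred_exists, Set.ofPred_and]
  refine isOpen_iUnion fun c => isOpen_const.inter <| isOpen_iUnion fun d => isOpen_iUnion fun a =>
    isOpen_iUnion fun b => isOpen_iUnion fun n => isOpen_iUnion fun n' => isOpen_const.inter ?_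
  exact hU.preimage (by unfold returnShape; fun_prop)

theorem exists_forall_add_mul_mem {x k χ₀ χ₁ : ℝ} (hU : U ∈ 𝓝 (x, k, χ₀, χ₁)) :
    ∃ δ > 0, ∀ x' k' s w : ℝ, |x' - x| < δ → |k' - k| < δ → |s| < δ → |w - χ₁| < δ →
      (x', k', χ₀ + s, w + s * x') ∈ U := by
  have hcont : Continuous fun p : ℝ × ℝ × ℝ × ℝ =>
      (p.1, p.2.1, χ₀ + p.2.2.1, p.2.2.2 + p.2.2.1 * p.1) := by fun_prop
  obtain ⟨δ, hδ, hsub⟩ := Metric.mem_nhds_iff.1 <|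
    hcont.continuousAt.preimage_mem_nhds (x := (x, k, 0, χ₁)) (by simpa using hU)
  refine ⟨δ, hδ, fun x' k' s w hx' hk' hs hw => hsub (a := (x', k', s, w)) ?_⟩
  exact max_lt hx' (max_lt hk' (max_lt (by simpa using hs) hw))

theorem exists_closedBall_subset_returnSet {x k χ₀ χ₁ θ₁ δ : ℝ} {K : ℕ} {B c d a b : ℤ}
    (hU : ∀ x' k' s w : ℝ, |x' - x| < δ → |k' - k| < δ → |s| < δ → |w - χ₁| < δ →
      (x', k', χ₀ + s, w + s * x') ∈ U)
    (hK : ∀ t : ℝ, ∃ j m : ℤ, |j| ≤ K ∧ |j * x + t - m| < δ / 2) (hc : 0 < c) (hBc : B ≤ c)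
    (hdet : a * d - b * c = 1) (hd : |(d / c : ℝ) - x| < δ / (2 * (K + 1)))
    (ha : |c * (a - c * θ₁) - k| < δ) (y₀ : ℝ) :
    ∃ y, Metric.closedBall y (δ / 2 / c) ⊆
      {θ₂ | (θ₁, θ₂) ∈ returnSet U B} ∩ Metric.closedBall y₀ ((K + 1 + δ / 2) / c) := by
  have hcR : (0 : ℝ) < c := mod_cast hc
  have hδ : 0 < δ := (abs_nonneg _).trans_lt ha
  have hdδ : |(d / c : ℝ) - x| < δ :=
    hd.trans_le (div_le_self hδ.le (by linarith [K.cast_nonneg (α := ℝ)]))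
  have hKd : K * |(d / c : ℝ) - x| ≤ δ / 2 := by
    have := (lt_div_iff₀ (by positivity)).1 hd
    linarith [abs_nonneg ((d / c : ℝ) - x)]
  obtain ⟨y, n, n', hy, hn, hn'⟩ := exists_mul_sub_eq_and_abs_lt hK hcR hKd y₀ χ₀ χ₁
  refine ⟨y, fun θ hθ => ⟨⟨c, hBc, d, a, b, n, n', hdet, ?_⟩, ?_⟩⟩
  · have hs : |c * (θ - y)| < δ := by
      rw [abs_mul, abs_of_pos hcR, ← Real.dist_eq]
      exact ((le_div_iff₀' hcR).1 hθ).trans_lt (half_lt_self hδ)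
    have hmem := hU _ _ _ (d * y - n') hdδ ha hs (by linarith)
    have hshape : returnShape (θ₁, θ) c d a n n' = ((d / c : ℝ), c * (a - c * θ₁),
        χ₀ + c * (θ - y), d * y - n' + c * (θ - y) * (d / c)) := by
      simp only [returnShape, ← hn, Prod.mk.injEq, true_and]
      constructor <;> field_simp <;> ring
    rwa [hshape]
  · have hsplit : (K + 1 + δ / 2) / (c : ℝ) = δ / 2 / c + (K + 1) / c := by ring
    rw [Metric.mem_closedBall, hsplit]
    exact (dist_triangle θ y y₀).trans (add_le_add hθ hy)

theorem ae_mem_returnSet_snd {x k χ₀ χ₁ θ₁ : ℝ} (hx : Irrational x) (hU : U ∈ 𝓝 (x, k, χ₀, χ₁))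
    (hθ₁ : ∀ V ∈ 𝓝 (x, k), ∃ᶠ c : ℤ in atTop, ∃ d a b : ℤ,
      a * d - b * c = 1 ∧ ((d / c : ℝ), c * (a - c * θ₁)) ∈ V) (B : ℤ) :
    ∀ᵐ θ₂ : ℝ, (θ₁, θ₂) ∈ returnSet U B := by
  obtain ⟨δ, hδ, hball⟩ := exists_forall_add_mul_mem hU
  obtain ⟨K, hK⟩ := exists_forall_abs_mul_add_sub_lt hx (half_pos hδ)
  refine ae_mem_of_frequently_closedBall_subset volume (S := {θ₂ | (θ₁, θ₂) ∈ returnSet U B})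
    (c := (δ / 2) / (K + 1 + δ / 2)) (by positivity) (Eventually.of_forall fun y₀ => ?_)
  have htendsto : Tendsto (fun c : ℤ => (K + 1 + δ / 2) / (c : ℝ)) atTop (𝓝[>] 0) := by
    refine tendsto_nhdsWithin_iff.2
      ⟨tendsto_const_nhds.div_atTop tendsto_intCast_atTop_atTop, ?_⟩
    filter_upwards [eventually_gt_atTop 0] with c hc
    have hcR : (0 : ℝ) < c := mod_cast hc
    exact div_pos (by positivity) hcR
  have hV : Metric.ball x (δ / (2 * (K + 1))) ×ˢ Metric.ball k δ ∈ 𝓝 (x, k) :=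
    prod_mem_nhds (Metric.ball_mem_nhds _ (by positivity)) (Metric.ball_mem_nhds _ hδ)
  refine htendsto.frequently (((hθ₁ _ hV).and_eventually
    (eventually_ge_atTop (max B 1))).mono ?_)
  rintro c ⟨⟨d, a, b, hdet, hd, ha⟩, hBc⟩
  rw [div_mul_div_cancel₀ (by positivity)]
  exact exists_closedBall_subset_returnSet hball hK (by lia) (by lia) hdet hd ha y₀

theorem ae_mem_returnSet (hU : IsOpen U) (hne : U.Nonempty) :
    ∀ᵐ θ : ℝ × ℝ, ∀ B : ℤ, θ ∈ returnSet U B := by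
  obtain ⟨⟨x, k, χ₀, χ₁⟩, hxU, hx⟩ :=
    (dense_irrational.preimage isOpenMap_fst).inter_open_nonempty U hU hne
  refine ae_all_iff.2 fun B => ?_
  rw [Measure.volume_eq_prod,
    Measure.ae_prod_mem_iff_ae_ae_mem (isOpen_returnSet hU B).measurableSet]
  filter_upwards [ae_forall_nhds_frequently x k] with θ₁ hθ₁
  exact ae_mem_returnSet_snd hx (hU.mem_nhds hxU) hθ₁ B

end Recurrence

section SmallProducts

variable {ε κ : ℝ} {θ : ℝ × ℝ}

theorem shape_returnShape {c d a b : ℤ} (hc : c ≠ 0) (hdet : a * d - b * c = 1) (n n' : ℤ) :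
    shape (returnShape θ c d a n n') = Matrix.diagonal ![(c : ℝ)⁻¹, c, 1] *
      (approxMatrix θ * !![c, d, 0; a, b, 0; n, n', -1].map ((↑) : ℤ → ℝ)) := by
  have hcR : (c : ℝ) ≠ 0 := mod_cast hc
  have hcd : (c : ℝ) * (d / c) = d := by field_simp
  have hdetR : (a * d - b * c : ℝ) = 1 := mod_cast hdet
  have hcenter : 1 - c * (a - c * θ.1) * (d / c) = c * (θ.1 * d - b) := by
    linear_combination (-(a - c * θ.1)) * hcd - hdetR
  ext i j
  rw [Matrix.diagonal_mul]
  fin_cases i <;> fin_cases j <;>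
    simp [shape, returnShape, approxMatrix, Matrix.mul_apply, Fin.sum_univ_three, hcR, hcenter] <;>
    ring

theorem isGood_approxMatrix {U : Set (ℝ × ℝ × ℝ × ℝ)} (hκ : 0 < κ)
    (hU : ∀ q ∈ U, IsGood ε κ (shape q)) (hθ : ∀ B : ℤ, θ ∈ returnSet U B) (B : ℕ) :
    IsGood ε B (approxMatrix θ) := by
  obtain ⟨c, hc, d, a, b, n, n', hdet, hq⟩ := hθ (max 1 ⌈B / κ⌉)
  have hc0 : 0 < c := by lia
  have hcR : (0 : ℝ) < c := mod_cast hc0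
  have hgood := hU _ hq
  rw [shape_returnShape hc0.ne' hdet] at hgood
  have hN : IsUnit (!![c, d, 0; a, b, 0; n, n', -1] : Matrix (Fin 3) (Fin 3) ℤ).det := by
    have hdetN : (!![c, d, 0; a, b, 0; n, n', -1] : Matrix (Fin 3) (Fin 3) ℤ).det =
        a * d - b * c := by
      rw [Matrix.det_fin_three]
      simp only [Matrix.of_apply, Matrix.cons_val]
      ring
    rw [hdetN, hdet]
    exact isUnit_one
  have hBc : (B : ℝ) ≤ κ / (c : ℝ)⁻¹ := by
    rw [div_inv_eq_mul, ← div_le_iff₀' hκ]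
    exact (Int.le_ceil _).trans (mod_cast (le_max_right _ _).trans hc)
  refine ((hgood.of_diagonal_mul (inv_pos.2 hcR) ?_).of_mul_map_intCast hN).mono hBc
  simp [Fin.prod_univ_three, hcR.ne']

theorem approxMatrix_mulVec (θ : ℝ × ℝ) (v : Fin 3 → ℝ) :
    approxMatrix θ *ᵥ v = ![v 0, v 0 * θ.1 - v 1, v 0 * θ.2 - v 2] := by
  ext i
  fin_cases i <;> simp [approxMatrix, Matrix.mulVec, dotProduct, Fin.sum_univ_three] <;> ring

theorem frequently_mul_nint_lt_of_isGood (h : ∀ B : ℕ, IsGood ε B (approxMatrix θ)) (η₁ η₂ : ℝ) :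
    ∃ᶠ q : ℕ in atTop, (q : ℝ) * nint (q * θ.1 - η₁) * nint (q * θ.2 - η₂) < ε := by
  refine frequently_atTop.2 fun B => ?_
  obtain ⟨z, hz, hlt⟩ := h B ![0, η₁, η₂]
  simp only [approxMatrix_mulVec, Fin.prod_univ_three, Pi.add_apply, Function.comp_apply,
    Matrix.cons_val, zero_add, ← sub_sub, abs_mul] at hz hlt
  obtain ⟨q, hq⟩ := Int.eq_ofNat_of_zero_le (a := z 0) (by have : (B : ℤ) < z 0 := mod_cast hz; lia)
  simp only [hq, Int.cast_natCast, Nat.cast_lt, Nat.abs_cast] at hz hlt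
  refine ⟨q, hz.le, lt_of_le_of_lt ?_ hlt⟩
  have hnint₁ : nint (q * θ.1 - η₁) ≤ |q * θ.1 - η₁ - z 1| := round_le _ _
  have hnint₂ : nint (q * θ.2 - η₂) ≤ |q * θ.2 - η₂ - z 2| := round_le _ _
  have hnonneg : 0 ≤ nint (q * θ.2 - η₂) := abs_nonneg _
  gcongr

end SmallProducts

end Littlewood

/-- Shapira's theorem: almost every pair satisfies the inhomogeneous Littlewood property. -/
theorem stmt5 :
    ∀ᵐ θ ∂(volume : Measure (ℝ × ℝ)), ∀ η₁ η₂ : ℝ, ∀ ε : ℝ, 0 < ε →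
      ∃ᶠ q : ℕ in atTop, (q : ℝ) * nint (q * θ.1 - η₁) * nint (q * θ.2 - η₂) < ε := by
  have hgood : ∀ᵐ θ : ℝ × ℝ, ∀ m B : ℕ,
      Littlewood.IsGood (1 / ((m : ℝ) + 1)) B (Littlewood.approxMatrix θ) := by
    refine ae_all_iff.2 fun m => ?_
    obtain ⟨κ, hκ, U, hU, hne, hUgood⟩ :=
      Littlewood.exists_forall_isGood_shape (by positivity : (0 : ℝ) < 1 / (m + 1))
    filter_upwards [Littlewood.ae_mem_returnSet hU hne] with θ hθ
    exact Littlewood.isGood_approxMatrix hκ hUgood hθ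
  filter_upwards [hgood] with θ hθ η₁ η₂ ε hε
  obtain ⟨m, hm⟩ := exists_nat_one_div_lt hε
  exact (Littlewood.frequently_mul_nint_lt_of_isGood (hθ m) η₁ η₂).mono fun q hq => hq.trans hm
end

section
/- Suppose the real numbers θ_1 and θ_2 are linearly dependent over ℤ together with 1, i.e. there exist integers (a, b, c) ≠ (0, 0, 0) with aθ_1 + bθ_2 + c = 0. Then there exist real numbers η_1, η_2 such that inf_{x ∈ ℤ_{>0}} x · ‖xθ_1 − η_1‖ · ‖xθ_2 − η_2‖ > 0. -/
open Filter

/-!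
All distances to the nearest integer are norms in `ℝ ⧸ ℤ`. Call `η` a bad shift for `θ` if
`x ‖xθ - η‖` is bounded below over `x > 0`.

Every `θ` has a bad shift. Let `q i` be the least `q > 0` with `‖qθ‖ ≤ 4⁻ⁱ`. A determinant argument
shows that `q` only takes new values comparable with `4ⁱ`, so nested intervals yield an `η` with all
`‖(q i)η‖` bounded below. For `x` a small multiple of `4ⁱ`, the identity
`(q i)η = x(q i)θ - (q i)(xθ - η)` then bounds `‖xθ - η‖` below by a multiple of `1 / q i ≥ 4⁻ⁱ`.

If `aθ₁ + bθ₂ = 0` in `ℝ ⧸ ℤ`, choose bad shifts `η₁`, `η₂` with `aη₁ + bη₂ = 1/2`. Since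
`a(xθ₁ - η₁) + b(xθ₂ - η₂) = -1/2` for all `x`, the two factors `‖xθᵢ - ηᵢ‖` are never
simultaneously small: one of them is bounded below, and the other is at least a multiple of `1 / x`.
-/

section BadShift

variable {G : Type*} [SeminormedAddCommGroup G] {θ η θ₁ θ₂ η₁ η₂ : G}

/-- `η` is a bad shift for `θ`: the multiples `n • θ`, `n > 0`, approach `η` no faster than a
constant times `1 / n`. In `ℝ ⧸ ℤ` this says that `η` is an inhomogeneous term making `θ` badly
approximable. -/
def IsBadShift (θ η : G) : Prop :=
  ∃ c : ℝ, 0 < c ∧ ∀ n : ℕ, 0 < n → c ≤ n * ‖n • θ - η‖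

namespace IsBadShift

theorem neg (h : IsBadShift θ η) : IsBadShift (-θ) (-η) := by
  obtain ⟨c, hc, hn⟩ := h
  refine ⟨c, hc, fun n hpos ↦ ?_⟩
  rw [smul_neg, neg_sub_neg, norm_sub_rev]
  exact hn n hpos

theorem zero_left (hη : 0 < ‖η‖) : IsBadShift 0 η := by
  refine ⟨‖η‖, hη, fun n hn ↦ ?_⟩
  rw [smul_zero, zero_sub, norm_neg]
  exact le_mul_of_one_le_left hη.le (mod_cast hn)

theorem of_zsmul {a : ℤ} (ha : a ≠ 0) (h : IsBadShift (a • θ) (a • η)) : IsBadShift θ η := by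
  obtain ⟨c, hc, hn⟩ := h
  have ha' : 0 < ‖a‖ := norm_pos_iff.2 ha
  refine ⟨c / ‖a‖, by positivity, fun n hpos ↦ ?_⟩
  rw [div_le_iff₀ ha']
  calc
    c ≤ n * ‖a • (n • θ - η)‖ := by rw [smul_sub, smul_comm]; exact hn n hpos
    _ ≤ n * (‖a‖ * ‖n • θ - η‖) := by gcongr; exact norm_zsmul_le a _
    _ = n * ‖n • θ - η‖ * ‖a‖ := by ring

end IsBadShift

theorem norm_zsmul_add_zsmul_le_mul_max {a b : ℤ} (hθ : a • θ₁ + b • θ₂ = 0) (η₁ η₂ : G) (n : ℕ) :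
    ‖a • η₁ + b • η₂‖ ≤ (‖a‖ + ‖b‖) * max ‖n • θ₁ - η₁‖ ‖n • θ₂ - η₂‖ := by
  have hsum : a • (n • θ₁ - η₁) + b • (n • θ₂ - η₂) = -(a • η₁ + b • η₂) := by
    rw [smul_sub, smul_sub, sub_add_sub_comm, smul_comm a n, smul_comm b n, ← smul_add, hθ,
      smul_zero, zero_sub]
  calc
    ‖a • η₁ + b • η₂‖ = ‖a • (n • θ₁ - η₁) + b • (n • θ₂ - η₂)‖ := by rw [hsum, norm_neg]
    _ ≤ ‖a‖ * ‖n • θ₁ - η₁‖ + ‖b‖ * ‖n • θ₂ - η₂‖ :=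
      (norm_add_le _ _).trans <| add_le_add (norm_zsmul_le a _) (norm_zsmul_le b _)
    _ ≤ (‖a‖ + ‖b‖) * max ‖n • θ₁ - η₁‖ ‖n • θ₂ - η₂‖ := by
      rw [add_mul]
      gcongr
      exacts [le_max_left _ _, le_max_right _ _]

theorem IsBadShift.exists_pos_le_mul_norm_mul_norm (h₁ : IsBadShift θ₁ η₁)
    (h₂ : IsBadShift θ₂ η₂) {a b : ℤ} (hθ : a • θ₁ + b • θ₂ = 0) (hη : 0 < ‖a • η₁ + b • η₂‖) :
    ∃ c : ℝ, 0 < c ∧ ∀ n : ℕ, 0 < n → c ≤ n * ‖n • θ₁ - η₁‖ * ‖n • θ₂ - η₂‖ := by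
  obtain ⟨c₁, hc₁, hn₁⟩ := h₁
  obtain ⟨c₂, hc₂, hn₂⟩ := h₂
  have hab : 0 < ‖a‖ + ‖b‖ :=
    pos_of_mul_pos_left (hη.trans_le (norm_zsmul_add_zsmul_le_mul_max hθ η₁ η₂ 0)) (by positivity)
  refine ⟨min c₁ c₂ * (‖a • η₁ + b • η₂‖ / (‖a‖ + ‖b‖)), by positivity, fun n hn ↦ ?_⟩
  have hmin : min c₁ c₂ ≤ n * min ‖n • θ₁ - η₁‖ ‖n • θ₂ - η₂‖ := by
    rw [mul_min_of_nonneg _ _ n.cast_nonneg]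
    exact min_le_min (hn₁ n hn) (hn₂ n hn)
  have hmax : ‖a • η₁ + b • η₂‖ / (‖a‖ + ‖b‖) ≤ max ‖n • θ₁ - η₁‖ ‖n • θ₂ - η₂‖ :=
    (div_le_iff₀' hab).2 (norm_zsmul_add_zsmul_le_mul_max hθ η₁ η₂ n)
  calc
    min c₁ c₂ * (‖a • η₁ + b • η₂‖ / (‖a‖ + ‖b‖))
      ≤ n * min ‖n • θ₁ - η₁‖ ‖n • θ₂ - η₂‖ * max ‖n • θ₁ - η₁‖ ‖n • θ₂ - η₂‖ := by gcongr
    _ = n * ‖n • θ₁ - η₁‖ * ‖n • θ₂ - η₂‖ := by rw [mul_assoc, min_mul_max, mul_assoc]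

theorem norm_nsmul_le_mul_norm_nsmul_add (θ η : G) (m n : ℕ) :
    ‖m • η‖ ≤ n * ‖m • θ‖ + m * ‖n • θ - η‖ := by
  have h : m • η = n • m • θ - m • (n • θ - η) := by
    rw [smul_sub, smul_comm, sub_sub_cancel]
  rw [h]
  exact (norm_sub_le _ _).trans <| add_le_add norm_nsmul_le norm_nsmul_le

end BadShift

theorem exists_coe_eq_and_abs_eq_norm (u : UnitAddCircle) :
    ∃ t : ℝ, (t : UnitAddCircle) = u ∧ |t| = ‖u‖ := by
  obtain ⟨x, rfl⟩ := QuotientAddGroup.mk_surjective u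
  exact ⟨x - round x, by simp, UnitAddCircle.norm_eq.symm⟩

theorem eq_zero_of_coe_eq_zero_of_abs_lt_one {t : ℝ} (h : (t : UnitAddCircle) = 0) (ht : |t| < 1) :
    t = 0 := by
  obtain ⟨n, rfl⟩ := (AddCircle.coe_eq_zero_iff 1).1 h
  rw [zsmul_one] at ht ⊢
  have hn : |n| < 1 := mod_cast ht
  rw [Int.abs_lt_one_iff.1 hn, Int.cast_zero]

theorem exists_pos_le_norm_nsmul_le_one_div (θ : UnitAddCircle) {n : ℕ} (hn : 0 < n) :
    ∃ k : ℕ, 0 < k ∧ k ≤ n ∧ ‖k • θ‖ ≤ 1 / n := by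
  obtain ⟨k, ⟨hk_pos, hk_le⟩, h⟩ := AddCircle.exists_norm_nsmul_le (T := 1) θ hn
  refine ⟨k, hk_pos, hk_le, h.trans ?_⟩
  gcongr
  exact n.le_succ

theorem norm_sub_nsmul_le_norm_nsmul (θ : UnitAddCircle) {r s : ℕ} (hrs : r < s)
    (h : s * ‖r • θ‖ + r * ‖s • θ‖ < 1) : ‖(s - r) • θ‖ ≤ ‖s • θ‖ := by
  obtain ⟨α, hα, hα_abs⟩ := exists_coe_eq_and_abs_eq_norm (r • θ)
  obtain ⟨β, hβ, hβ_abs⟩ := exists_coe_eq_and_abs_eq_norm (s • θ)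
  have hs : (0 : ℝ) < s := mod_cast r.zero_le.trans_lt hrs
  have hdet : s * α - r * β = 0 := by
    refine eq_zero_of_coe_eq_zero_of_abs_lt_one ?_ ?_
    · rw [← nsmul_eq_mul, ← nsmul_eq_mul, AddCircle.coe_sub, AddCircle.coe_nsmul,
        AddCircle.coe_nsmul, hα, hβ, smul_comm, sub_self]
    · refine ((abs_sub _ _).trans_eq ?_).trans_lt h
      rw [abs_mul, abs_mul, Nat.abs_cast, Nat.abs_cast, hα_abs, hβ_abs]
  have hαβ : β - α = (s - r) / s * β := by
    field_simp
    linear_combination -hdet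
  calc
    ‖(s - r) • θ‖ = ‖((β - α : ℝ) : UnitAddCircle)‖ := by
      rw [AddCircle.coe_sub, hα, hβ, sub_nsmul _ hrs.le, sub_eq_add_neg]
    _ ≤ |β - α| := QuotientAddGroup.norm_mk_le_norm
    _ = (s - r) / s * |β| := by
      have : (r : ℝ) ≤ s := mod_cast hrs.le
      rw [hαβ, abs_mul, abs_of_nonneg (div_nonneg (sub_nonneg.2 this) hs.le)]
    _ ≤ |β| := mul_le_of_le_one_left (abs_nonneg β) ((div_le_one hs).2 (by simp))
    _ = ‖s • θ‖ := hβ_abs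

theorem exists_ne_zero_two_zsmul_eq_zero : ∃ h : UnitAddCircle, h ≠ 0 ∧ (2 : ℤ) • h = 0 := by
  refine ⟨((1 / 2 : ℝ) : UnitAddCircle), norm_pos_iff.1 ?_, ?_⟩
  · rw [AddCircle.norm_half_period_eq]
    positivity
  · rw [← AddCircle.coe_zsmul]
    norm_num

section FirstReturn

/-- The first time `k > 0` at which `k • θ` is within `ε` of `0`; in `ℝ ⧸ ℤ`, the least denominator
`k` of a rational `p / k` with `|k θ - p| ≤ ε`. It is `0` if there is no such time. -/
noncomputable def firstReturn {G : Type*} [SeminormedAddCommGroup G] (θ : G) (ε : ℝ) : ℕ :=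
  sInf {k : ℕ | 0 < k ∧ ‖k • θ‖ ≤ ε}

theorem firstReturn_le {G : Type*} [SeminormedAddCommGroup G] {θ : G} {ε : ℝ} {k : ℕ}
    (hk : 0 < k) (h : ‖k • θ‖ ≤ ε) : firstReturn θ ε ≤ k :=
  Nat.sInf_le ⟨hk, h⟩

variable (θ : UnitAddCircle) {ε δ : ℝ}

theorem firstReturn_spec (hε : 0 < ε) :
    0 < firstReturn θ ε ∧ ‖firstReturn θ ε • θ‖ ≤ ε := by
  obtain ⟨n, hn⟩ := exists_nat_one_div_lt hε
  obtain ⟨k, hk, -, h⟩ := exists_pos_le_norm_nsmul_le_one_div θ n.succ_pos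
  exact Nat.sInf_mem (s := {k : ℕ | 0 < k ∧ ‖k • θ‖ ≤ ε})
    ⟨k, hk, h.trans (by simpa using hn.le)⟩

theorem firstReturn_one_div_le {n : ℕ} (hn : 0 < n) : firstReturn θ (1 / n) ≤ n := by
  obtain ⟨k, hk, hkn, h⟩ := exists_pos_le_norm_nsmul_le_one_div θ hn
  exact (firstReturn_le hk h).trans hkn

theorem firstReturn_anti (hδ : 0 < δ) (hδε : δ ≤ ε) : firstReturn θ ε ≤ firstReturn θ δ :=
  firstReturn_le (firstReturn_spec θ hδ).1 ((firstReturn_spec θ hδ).2.trans hδε)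

theorem firstReturn_eq_or_one_le_mul_add (hδ : 0 < δ) (hδε : δ ≤ ε) :
    firstReturn θ δ = firstReturn θ ε ∨ 1 ≤ firstReturn θ δ * (ε + δ) := by
  obtain ⟨hr_pos, hr⟩ := firstReturn_spec θ (hδ.trans_le hδε)
  obtain ⟨hs_pos, hs⟩ := firstReturn_spec θ hδ
  rcases (firstReturn_anti θ hδ hδε).eq_or_lt with heq | hlt
  · exact Or.inl heq.symm
  refine Or.inr (not_lt.1 fun hsmall ↦ ?_)
  have hreturn : ‖(firstReturn θ δ - firstReturn θ ε) • θ‖ ≤ δ := by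
    refine (norm_sub_nsmul_le_norm_nsmul θ hlt (lt_of_le_of_lt ?_ hsmall)).trans hs
    rw [mul_add]
    gcongr
  have := firstReturn_le (Nat.sub_pos_of_lt hlt) hreturn
  lia

theorem firstReturn_four_pow_le (i : ℕ) : firstReturn θ (1 / 4 ^ i) ≤ 4 ^ i := by
  simpa using firstReturn_one_div_le θ (n := 4 ^ i) (by positivity)

theorem exists_firstReturn_eq_and_four_pow_le (i : ℕ) :
    ∃ j, firstReturn θ (1 / 4 ^ i) = firstReturn θ (1 / 4 ^ j) ∧
      4 ^ j ≤ 5 * (firstReturn θ (1 / 4 ^ j) : ℝ) := by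
  induction i with
  | zero =>
    have h : (1 : ℝ) ≤ firstReturn θ (1 / 4 ^ 0) :=
      mod_cast (firstReturn_spec θ (by positivity)).1
    exact ⟨0, rfl, by linarith⟩
  | succ i ih =>
    have hle : (1 / 4 ^ (i + 1) : ℝ) ≤ 1 / 4 ^ i := by gcongr <;> simp
    rcases firstReturn_eq_or_one_le_mul_add θ (by positivity) hle with heq | hone
    · rwa [heq]
    · refine ⟨i + 1, rfl, ?_⟩
      have hsum : (1 / 4 ^ i + 1 / 4 ^ (i + 1) : ℝ) = 5 / 4 ^ (i + 1) := by
        field_simp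
        ring
      rw [hsum, mul_div_assoc', one_le_div (by positivity)] at hone
      linarith

end FirstReturn

theorem exists_quarter_le_norm_coe_mul {q L : ℝ} (hq : 0 ≤ q) (hL : 0 ≤ L) (hqL : q * L ≤ 1 / 2)
    (u : ℝ) :
    ∃ v, Set.Icc v (v + L / 4) ⊆ Set.Icc u (u + L) ∧
      ∀ t ∈ Set.Icc v (v + L / 4), q * L / 4 ≤ ‖((q * t : ℝ) : UnitAddCircle)‖ := by
  by_contra! H
  -- Bad points `s`, `t` of the two outer quarters give `q * (t - s)` norm less than `q * L / 2`,
  -- but `q * (t - s)` lies in `[q * L / 2, 1 / 2]`, where the norm is the identity.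
  obtain ⟨s, ⟨hs_ge, hs_le⟩, hs⟩ := H u (Set.Icc_subset_Icc_right (by linarith))
  obtain ⟨t, ⟨ht_ge, ht_le⟩, ht⟩ :=
    H (u + 3 * L / 4) (Set.Icc_subset_Icc (by linarith) (by linarith))
  have hlower : q * (L / 2) ≤ q * (t - s) := by gcongr; linarith
  have hupper : q * (t - s) ≤ q * L := by gcongr; linarith
  have habs : |q * (t - s)| = q * (t - s) := abs_of_nonneg (le_trans (by positivity) hlower)
  have hnorm : ‖((q * (t - s) : ℝ) : UnitAddCircle)‖ = q * (t - s) := by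
    rw [(AddCircle.norm_coe_eq_abs_iff 1 one_ne_zero).2 (by rw [habs, abs_one]; linarith), habs]
  rw [mul_sub, AddCircle.coe_sub] at hnorm
  linarith [norm_sub_le ((q * t : ℝ) : UnitAddCircle) ((q * s : ℝ) : UnitAddCircle)]

theorem exists_forall_div_le_norm_coe_mul {q : ℕ → ℝ} (hq : ∀ i, 0 ≤ q i)
    (hq_le : ∀ i, q i ≤ 4 ^ i) :
    ∃ η : ℝ, ∀ i, q i / (8 * 4 ^ i) ≤ ‖((q i * η : ℝ) : UnitAddCircle)‖ := by
  let L : ℕ → ℝ := fun i ↦ 1 / (2 * 4 ^ i)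
  have hL : ∀ i, 0 ≤ L i := fun i ↦ by positivity
  have hL_succ : ∀ i, L (i + 1) = L i / 4 := fun i ↦ by simp only [L, pow_succ]; field_simp
  have hqL : ∀ i, q i * L i ≤ 1 / 2 := fun i ↦ by
    rw [mul_one_div, div_le_iff₀ (by positivity)]
    linarith [hq_le i]
  choose f hf_subset hf_norm using fun i ↦ exists_quarter_le_norm_coe_mul (hq i) (hL i) (hqL i)
  let u : ℕ → ℝ := fun n ↦ Nat.rec 0 f n
  have hu_anti : Antitone fun i ↦ Set.Icc (u i) (u i + L i) :=
    antitone_nat_of_succ_le fun i ↦ by rw [hL_succ]; exact hf_subset i (u i)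
  have hmem := Set.mem_iInter.1 <|
    ciSup_mem_iInter_Icc_of_antitone_Icc hu_anti fun i ↦ le_add_of_nonneg_right (hL i)
  refine ⟨⨆ i, u i, fun i ↦ ?_⟩
  calc
    q i / (8 * 4 ^ i) = q i * L i / 4 := by simp only [L]; field_simp; ring
    _ ≤ _ := hf_norm i (u i) _ (by rw [← hL_succ]; exact hmem (i + 1))

theorem exists_forall_le_norm_firstReturn_nsmul (θ : UnitAddCircle) :
    ∃ η : UnitAddCircle, ∀ i : ℕ, 1 / 40 ≤ ‖firstReturn θ (1 / 4 ^ i) • η‖ := by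
  obtain ⟨η, hη⟩ := exists_forall_div_le_norm_coe_mul (q := fun i ↦ firstReturn θ (1 / 4 ^ i))
    (fun _ ↦ Nat.cast_nonneg _) (fun i ↦ mod_cast firstReturn_four_pow_le θ i)
  refine ⟨η, fun i ↦ ?_⟩
  obtain ⟨j, hij, hj⟩ := exists_firstReturn_eq_and_four_pow_le θ i
  rw [hij, ← AddCircle.coe_nsmul, nsmul_eq_mul]
  refine le_trans ?_ (hη j)
  rw [div_le_div_iff₀ (by norm_num) (by positivity)]
  linarith

theorem exists_isBadShift (θ : UnitAddCircle) : ∃ η, IsBadShift θ η := by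
  obtain ⟨η, hη⟩ := exists_forall_le_norm_firstReturn_nsmul θ
  refine ⟨η, 1 / 25600, by norm_num, fun n hn ↦ ?_⟩
  have hn_one : (1 : ℝ) ≤ n := mod_cast hn
  -- The factor 80 makes the error `n * ‖q • θ‖` at most half of the lower bound `1 / 40` in `hη`.
  obtain ⟨i, hi_le, hi_lt⟩ := exists_nat_pow_near (x := 80 * (n : ℝ)) (y := 4)
    (by linarith) (by norm_num)
  set q := firstReturn θ (1 / 4 ^ (i + 1))
  have hqθ : n * ‖q • θ‖ ≤ 1 / 80 := calc
    n * ‖q • θ‖ ≤ n * (1 / 4 ^ (i + 1)) := by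
      gcongr
      exact (firstReturn_spec θ (by positivity)).2
    _ ≤ 1 / 80 := by
      rw [mul_one_div, div_le_div_iff₀ (by positivity) (by norm_num)]
      linarith
  have hq : (q : ℝ) ≤ 320 * n := calc
    (q : ℝ) ≤ (4 ^ (i + 1) : ℕ) := Nat.cast_le.2 (firstReturn_four_pow_le θ (i + 1))
    _ ≤ 320 * n := by push_cast; rw [pow_succ]; linarith
  have hqη : 1 / 80 ≤ q * ‖n • θ - η‖ := by
    linarith [hη (i + 1), norm_nsmul_le_mul_norm_nsmul_add θ η q n]
  have : q * ‖n • θ - η‖ ≤ 320 * n * ‖n • θ - η‖ := by gcongr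
  linarith

section DependentPair

variable {θ₁ θ₂ : UnitAddCircle} {a b : ℤ}

theorem exists_isBadShift_pair_of_zsmul_eq_zero (ha : a ≠ 0) (hθ : a • θ₁ = 0) :
    ∃ η₁ η₂, IsBadShift θ₁ η₁ ∧ IsBadShift θ₂ η₂ ∧ a • η₁ ≠ 0 := by
  obtain ⟨h, hh, -⟩ := exists_ne_zero_two_zsmul_eq_zero
  obtain ⟨η₁, rfl⟩ := DivisibleBy.surjective_smul UnitAddCircle ℤ ha h
  obtain ⟨η₂, hη₂⟩ := exists_isBadShift θ₂
  refine ⟨η₁, η₂, .of_zsmul ha ?_, hη₂, hh⟩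
  rw [hθ]
  exact .zero_left (norm_pos_iff.2 hh)

theorem exists_isBadShift_pair_of_ne_zero (ha : a ≠ 0) (hb : b ≠ 0) (hθ : a • θ₁ + b • θ₂ = 0) :
    ∃ η₁ η₂, IsBadShift θ₁ η₁ ∧ IsBadShift θ₂ η₂ ∧ a • η₁ + b • η₂ ≠ 0 := by
  obtain ⟨h, hh, h_two⟩ := exists_ne_zero_two_zsmul_eq_zero
  obtain ⟨η, hη⟩ := exists_isBadShift ((2 * a) • θ₁)
  obtain ⟨η₁, rfl⟩ := DivisibleBy.surjective_smul UnitAddCircle ℤ (mul_ne_zero two_ne_zero ha) η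
  obtain ⟨η₂, hη₂ : b • η₂ = h - a • η₁⟩ :=
    DivisibleBy.surjective_smul UnitAddCircle ℤ hb (h - a • η₁)
  have hθ₂ : (2 * b) • θ₂ = -((2 * a) • θ₁) := by
    rw [mul_smul, mul_smul, eq_neg_of_add_eq_zero_right hθ, smul_neg]
  -- Doubling removes `h`: a single bad shift `(2 * a) • η₁` serves both coordinates.
  have hη₂_two : (2 * b) • η₂ = -((2 * a) • η₁) := by
    rw [mul_smul, mul_smul, hη₂, smul_sub, h_two, zero_sub]
  refine ⟨η₁, η₂, .of_zsmul (mul_ne_zero two_ne_zero ha) hη,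
    .of_zsmul (mul_ne_zero two_ne_zero hb) ?_, ?_⟩
  · rw [hθ₂, hη₂_two]
    exact hη.neg
  · rwa [hη₂, add_sub_cancel]

theorem exists_isBadShift_pair (hab : ¬(a = 0 ∧ b = 0)) (hθ : a • θ₁ + b • θ₂ = 0) :
    ∃ η₁ η₂, IsBadShift θ₁ η₁ ∧ IsBadShift θ₂ η₂ ∧ a • η₁ + b • η₂ ≠ 0 := by
  rcases eq_or_ne a 0 with rfl | ha
  · have hb : b ≠ 0 := fun hb ↦ hab ⟨rfl, hb⟩
    obtain ⟨η₂, η₁, h₂, h₁, hne⟩ :=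
      exists_isBadShift_pair_of_zsmul_eq_zero (θ₂ := θ₁) hb (by simpa using hθ)
    exact ⟨η₁, η₂, h₁, h₂, by simpa using hne⟩
  rcases eq_or_ne b 0 with rfl | hb
  · obtain ⟨η₁, η₂, h₁, h₂, hne⟩ :=
      exists_isBadShift_pair_of_zsmul_eq_zero (θ₂ := θ₂) ha (by simpa using hθ)
    exact ⟨η₁, η₂, h₁, h₂, by simpa using hne⟩
  · exact exists_isBadShift_pair_of_ne_zero ha hb hθ

end DependentPair

theorem nint_natCast_mul_sub (n : ℕ) (θ η : ℝ) :
    nint (n * θ - η) = ‖n • (θ : UnitAddCircle) - (η : UnitAddCircle)‖ := by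
  rw [← AddCircle.coe_nsmul, ← AddCircle.coe_sub, nsmul_eq_mul, UnitAddCircle.norm_eq, nint]

/-- Khintchine's theorem on rationally dependent pairs. -/
theorem stmt7 (θ₁ θ₂ : ℝ)
    (hdep : ∃ a b c : ℤ, ¬(a = 0 ∧ b = 0 ∧ c = 0) ∧
      (a : ℝ) * θ₁ + (b : ℝ) * θ₂ + (c : ℝ) = 0) :
    ∃ η₁ η₂ : ℝ, ∃ c : ℝ, 0 < c ∧ ∀ x : ℕ, 0 < x →
      c ≤ (x : ℝ) * nint (x * θ₁ - η₁) * nint (x * θ₂ - η₂) := by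
  obtain ⟨a, b, c, hne, h⟩ := hdep
  have hab : ¬(a = 0 ∧ b = 0) := by
    rintro ⟨rfl, rfl⟩
    exact hne ⟨rfl, rfl, by simpa using h⟩
  have hθ : a • (θ₁ : UnitAddCircle) + b • (θ₂ : UnitAddCircle) = 0 := by
    rw [← AddCircle.coe_zsmul, ← AddCircle.coe_zsmul, ← AddCircle.coe_add,
      AddCircle.coe_eq_zero_iff]
    exact ⟨-c, by simp only [zsmul_eq_mul]; push_cast; linarith⟩
  obtain ⟨η₁, η₂, h₁, h₂, hη⟩ := exists_isBadShift_pair hab hθ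
  obtain ⟨η₁, rfl⟩ := QuotientAddGroup.mk_surjective η₁
  obtain ⟨η₂, rfl⟩ := QuotientAddGroup.mk_surjective η₂
  obtain ⟨c, hc, hle⟩ := h₁.exists_pos_le_mul_norm_mul_norm h₂ hθ (norm_pos_iff.2 hη)
  refine ⟨η₁, η₂, c, hc, fun x hx ↦ ?_⟩
  rw [nint_natCast_mul_sub, nint_natCast_mul_sub]
  exact hle x hx
end

section
/- There exists an absolute constant γ' > 0 with the following property: for every real M ≥ 2, every sequence of positive real numbers t_1, t_2, t_3, ... satisfying t_{j+1}/t_j ≥ 1 + 1/M for all j ≥ 1, and every sequence of real numbers η_1, η_2, η_3, ..., there exists a real number α such that ‖α t_j − η_j‖ ≥ γ' / (M log M) for all j ≥ 1. -/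
open Filter

/-!
Choose `α ∈ [0, 1]` avoiding, for every `j`, the set where `‖α t_j - η_j‖ < δ`, with `δ` of order
`1 / (M log M)`; by scaling, `t_0 = 1`. Replace the `j`-th forbidden set by its hull in the dyadic
grid of mesh about `δ / t_j`, which at worst doubles `δ`. The sequence grows by a factor `2 / δ` in
`h + 1` steps, with `h` of order `M log M`, so the hulls of index below `k - h` are unions of dyadic
intervals of length at least `1 / t_k`, and the `k`-th forbidden set fills a proportion `O(δ)` of
each such interval. This is a one-sided form of the hypothesis of the Lovász local lemma: as `δ h`
is small, finitely many hulls always leave a set of positive measure. Compactness of `[0, 1]`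
handles all `j` at once.
-/

section PeresSchlag

open MeasureTheory Set

lemma nint_eq_norm (x : ℝ) : nint x = ‖(x : UnitAddCircle)‖ :=
  UnitAddCircle.norm_eq.symm

lemma nint_add_le_add_abs (x y : ℝ) : nint (x + y) ≤ nint x + |y| := by
  rw [nint_eq_norm, nint_eq_norm, AddCircle.coe_add]
  exact (norm_add_le _ _).trans (by gcongr; exact QuotientAddGroup.norm_mk_le_norm)

lemma continuous_nint : Continuous nint := by
  rw [funext nint_eq_norm]
  exact continuous_norm.comp (AddCircle.continuous_mk' 1)

lemma exists_forall_le_nint_of_isCompact {K : Set ℝ} (hK : IsCompact K) {t η : ℕ → ℝ} {δ : ℝ}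
    (hfin : ∀ n, ∃ x ∈ K, ∀ i < n, δ ≤ nint (x * t i - η i)) :
    ∃ x ∈ K, ∀ i, δ ≤ nint (x * t i - η i) := by
  have hclosed : ∀ i, IsClosed {x | δ ≤ nint (x * t i - η i)} := fun i =>
    isClosed_le continuous_const (continuous_nint.comp (by fun_prop))
  obtain ⟨x, hxK, hx⟩ := hK.inter_iInter_nonempty _ hclosed fun u => by
    obtain ⟨n, hn⟩ := u.exists_nat_subset_range
    obtain ⟨x, hxK, hx⟩ := hfin n
    exact ⟨x, hxK, mem_iInter₂.2 fun i hi => hx i (Finset.mem_range.1 (hn hi))⟩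
  exact ⟨x, hxK, mem_iInter.1 hx⟩

/-- The forbidden set of the problem: the reals `x` for which `x * t` is within `ε` of `η` modulo
one. -/
def nearInt (t η ε : ℝ) : Set ℝ := {x | nint (x * t - η) < ε}

lemma card_Icc_ceil_floor_le {a b : ℝ} (hab : a ≤ b + 1) :
    ((Finset.Icc ⌈a⌉ ⌊b⌋).card : ℝ) ≤ b - a + 1 := by
  have hcard : (((Finset.Icc ⌈a⌉ ⌊b⌋).card : ℤ) : ℝ) = max ((⌊b⌋ : ℝ) + 1 - ⌈a⌉) 0 := by
    rw [Int.card_Icc, Int.toNat_eq_max]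
    push_cast
    rfl
  rw [← Int.cast_natCast, hcard, max_le_iff]
  constructor <;> linarith [Int.floor_le b, Int.le_ceil a]

lemma Ico_inter_nearInt_subset {t : ℝ} (ht : 0 < t) (η ε u v : ℝ) :
    Ico u v ∩ nearInt t η ε ⊆ ⋃ m ∈ Finset.Icc ⌈u * t - η - ε⌉ ⌊v * t - η + ε⌋,
      Icc ((η + m - ε) / t) ((η + m + ε) / t) := by
  rintro x ⟨⟨hux, hxv⟩, hx⟩
  have hround := abs_lt.1 (show |x * t - η - round (x * t - η)| < ε from hx)
  have hut : u * t ≤ x * t := by gcongr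
  have hvt : x * t ≤ v * t := by gcongr
  refine mem_biUnion (x := round (x * t - η)) ?_ ⟨?_, ?_⟩
  · rw [Finset.mem_coe, Finset.mem_Icc, Int.ceil_le, Int.le_floor]
    constructor <;> linarith
  · rw [div_le_iff₀ ht]
    linarith
  · rw [le_div_iff₀ ht]
    linarith

lemma volume_Ico_inter_nearInt_le {t ε u v : ℝ} (ht : 0 < t) (hε : 0 ≤ ε) (huv : u ≤ v) (η : ℝ) :
    volume (Ico u v ∩ nearInt t η ε) ≤
      ENNReal.ofReal (((v - u) * t + 2 * ε + 1) * (2 * ε / t)) := by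
  have hut : u * t ≤ v * t := by gcongr
  set J := Finset.Icc ⌈u * t - η - ε⌉ ⌊v * t - η + ε⌋
  have hcard : (J.card : ℝ) ≤ (v - u) * t + 2 * ε + 1 :=
    (card_Icc_ceil_floor_le (by linarith)).trans_eq (by ring)
  calc volume (Ico u v ∩ nearInt t η ε)
      ≤ volume (⋃ m ∈ J, Icc ((η + m - ε) / t) ((η + m + ε) / t)) :=
        measure_mono (Ico_inter_nearInt_subset ht η ε u v)
    _ ≤ ∑ m ∈ J, volume (Icc ((η + m - ε) / t) ((η + m + ε) / t)) :=
        measure_biUnion_finset_le _ _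
    _ = ∑ m ∈ J, ENNReal.ofReal (2 * ε / t) := by
        refine Finset.sum_congr rfl fun m _ => ?_
        rw [Real.volume_Icc]
        congr 1
        ring
    _ = ENNReal.ofReal (J.card * (2 * ε / t)) := by
        rw [Finset.sum_const, nsmul_eq_mul, ENNReal.ofReal_mul (by positivity),
          ENNReal.ofReal_natCast]
    _ ≤ ENNReal.ofReal (((v - u) * t + 2 * ε + 1) * (2 * ε / t)) := by gcongr

/-- The index of the half-open dyadic interval of length `2 ^ (-L)` containing `x`. -/
noncomputable def dyadicIndex (L : ℕ) (x : ℝ) : ℤ := ⌊x * 2 ^ L⌋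

/-- The σ-algebra of unions of half-open dyadic intervals of length `2 ^ (-L)`. -/
noncomputable abbrev dyadicAlgebra (L : ℕ) : MeasurableSpace ℝ :=
  MeasurableSpace.comap (dyadicIndex L) ⊤

/-- The union of the half-open dyadic intervals of length `2 ^ (-L)` meeting `S`. -/
def dyadicHull (L : ℕ) (S : Set ℝ) : Set ℝ := dyadicIndex L ⁻¹' (dyadicIndex L '' S)

lemma preimage_dyadicIndex_singleton (L : ℕ) (a : ℤ) :
    dyadicIndex L ⁻¹' {a} = Ico (a / 2 ^ L : ℝ) ((a + 1) / 2 ^ L) := by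
  ext x
  have hp : (0 : ℝ) < 2 ^ L := by positivity
  rw [mem_preimage, mem_singleton_iff, dyadicIndex, Int.floor_eq_iff, mem_Ico, div_le_iff₀ hp,
    lt_div_iff₀ hp]

lemma measurable_dyadicIndex (L : ℕ) : Measurable (dyadicIndex L) :=
  Int.measurable_floor.comp (measurable_id.mul_const _)

lemma dyadicIndex_succ_div_two (L : ℕ) (x : ℝ) : dyadicIndex (L + 1) x / 2 = dyadicIndex L x := by
  have hhalf : x * 2 ^ (L + 1) / (2 : ℕ) = x * 2 ^ L := by
    push_cast
    ring
  rw [dyadicIndex, dyadicIndex, ← hhalf, Int.floor_div_natCast, Nat.cast_ofNat]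

lemma monotone_dyadicAlgebra : Monotone dyadicAlgebra := by
  refine monotone_nat_of_le_succ fun L => ?_
  have hfactor : dyadicIndex L = (· / 2) ∘ dyadicIndex (L + 1) :=
    funext fun x => (dyadicIndex_succ_div_two L x).symm
  rw [dyadicAlgebra, hfactor, ← MeasurableSpace.comap_comp]
  exact MeasurableSpace.comap_mono le_top

lemma measurableSet_dyadicHull (L : ℕ) (S : Set ℝ) :
    MeasurableSet[dyadicAlgebra L] (dyadicHull L S) :=
  ⟨_, trivial, rfl⟩

lemma measurableSet_dyadicAlgebra_Ico_zero_one (L : ℕ) :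
    MeasurableSet[dyadicAlgebra L] (Ico (0 : ℝ) 1) := by
  refine monotone_dyadicAlgebra L.zero_le _ ⟨{0}, trivial, ?_⟩
  simp only [preimage_dyadicIndex_singleton, Int.cast_zero, pow_zero, div_one, zero_add]

lemma subset_dyadicHull (L : ℕ) (S : Set ℝ) : S ⊆ dyadicHull L S :=
  subset_preimage_image _ S

lemma dyadicHull_nearInt_subset {L : ℕ} {t δ : ℝ} (ht : 0 < t) (hL : t ≤ δ * 2 ^ L) (η ε : ℝ) :
    dyadicHull L (nearInt t η ε) ⊆ nearInt t η (ε + δ) := by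
  rintro x ⟨y, hy, hyx⟩
  have hp : (0 : ℝ) < 2 ^ L := by positivity
  have hδ : 0 < δ := pos_of_mul_pos_left (ht.trans_le hL) hp.le
  have hmesh : |x - y| * 2 ^ L < 1 := by
    simpa only [← sub_mul, abs_mul, abs_of_pos hp] using
      Int.abs_sub_lt_one_of_floor_eq_floor hyx.symm
  calc nint (x * t - η) = nint ((y * t - η) + (x - y) * t) := by ring_nf
    _ ≤ nint (y * t - η) + |(x - y) * t| := nint_add_le_add_abs _ _
    _ = nint (y * t - η) + |x - y| * t := by rw [abs_mul, abs_of_pos ht]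
    _ ≤ nint (y * t - η) + δ * (|x - y| * 2 ^ L) := by
        rw [mul_left_comm]
        gcongr
    _ < ε + δ := add_lt_add hy (mul_lt_of_lt_one_right hδ hmesh)

section Density

variable {L : ℕ} {t ε : ℝ}

lemma volume_preimage_singleton_inter_nearInt_le (ht : 2 ^ L ≤ t) (hε : 0 ≤ ε)
    (hε' : ε ≤ 1 / 2) (η : ℝ) (a : ℤ) :
    volume (dyadicIndex L ⁻¹' {a} ∩ nearInt t η ε) ≤
      ENNReal.ofReal (6 * ε) * volume (dyadicIndex L ⁻¹' {a}) := by
  have hp : (0 : ℝ) < 2 ^ L := by positivity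
  have ht0 : 0 < t := hp.trans_le ht
  have hlength : ((a + 1) / 2 ^ L - a / 2 ^ L : ℝ) = 1 / 2 ^ L := by ring
  have hlong : 1 ≤ 1 / 2 ^ L * t := by
    rwa [one_div_mul_eq_div, one_le_div hp]
  rw [preimage_dyadicIndex_singleton, Real.volume_Ico, ← ENNReal.ofReal_mul (by positivity)]
  refine (volume_Ico_inter_nearInt_le ht0 hε (by gcongr; linarith) η).trans ?_
  rw [hlength]
  refine ENNReal.ofReal_le_ofReal ?_
  calc (1 / 2 ^ L * t + 2 * ε + 1) * (2 * ε / t) ≤ (3 * (1 / 2 ^ L * t)) * (2 * ε / t) := by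
        gcongr
        linarith
    _ = 6 * ε * (1 / 2 ^ L) := by
        field_simp
        ring

lemma volume_inter_nearInt_le (ht : 2 ^ L ≤ t) (hε : 0 ≤ ε)
    (hε' : ε ≤ 1 / 2) (η : ℝ) {S : Set ℝ} (hS : MeasurableSet[dyadicAlgebra L] S) :
    volume (S ∩ nearInt t η ε) ≤ ENNReal.ofReal (6 * ε) * volume S := by
  obtain ⟨A, -, rfl⟩ := hS
  have hcell (a : ℤ) : MeasurableSet (dyadicIndex L ⁻¹' {a}) :=
    measurable_dyadicIndex L (measurableSet_singleton a)
  have hsum (μ : Measure ℝ) :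
      ∑' a : A, μ (dyadicIndex L ⁻¹' {(a : ℤ)}) = μ (dyadicIndex L ⁻¹' A) :=
    tsum_measure_preimage_singleton A.to_countable fun a _ => hcell a
  rw [← Measure.restrict_apply (measurable_dyadicIndex L A.to_countable.measurableSet), ← hsum,
    ← hsum, ← ENNReal.tsum_mul_left]
  refine ENNReal.tsum_le_tsum fun a => ?_
  rw [Measure.restrict_apply (hcell a)]
  exact volume_preimage_singleton_inter_nearInt_le ht hε hε' η a

lemma measureReal_restrict_Ico_inter_nearInt_le (ht : 2 ^ L ≤ t) (hε : 0 ≤ ε)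
    (hε' : ε ≤ 1 / 2) (η : ℝ) {S : Set ℝ} (hS : MeasurableSet[dyadicAlgebra L] S) :
    (volume.restrict (Ico 0 1)).real (S ∩ nearInt t η ε) ≤
      6 * ε * (volume.restrict (Ico 0 1)).real S := by
  have hSI := MeasurableSet.inter hS (measurableSet_dyadicAlgebra_Ico_zero_one L)
  rw [measureReal_restrict_apply' measurableSet_Ico, measureReal_restrict_apply' measurableSet_Ico,
    inter_right_comm, ← ENNReal.toReal_ofReal (show 0 ≤ 6 * ε by positivity), measureReal_def,
    measureReal_def, ← ENNReal.toReal_mul]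
  refine ENNReal.toReal_mono (ENNReal.mul_ne_top ENNReal.ofReal_ne_top ?_)
    (volume_inter_nearInt_le ht hε hε' η hSI)
  exact measure_ne_top_of_subset inter_subset_right measure_Ico_lt_top.ne

end Density

lemma pos_of_sub_mul_le_succ {p : ℕ → ℝ} {c : ℝ} {h : ℕ} (h0 : 0 < p 0) (hc : 0 ≤ c)
    (hch : c * (h + 1) ≤ 1 / 4) (hp : ∀ k, p k - c * p (k - h) ≤ p (k + 1)) (n : ℕ) :
    0 < p n := by
  have hh : (0 : ℝ) ≤ c * h := by positivity
  have hr : 0 < 1 - 2 * c := by linarith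
  have hhalf : 1 / 2 ≤ (1 - 2 * c) ^ h := by
    have hbernoulli := one_add_mul_le_pow (a := -(2 * c)) (by linarith) h
    rw [← sub_eq_add_neg] at hbernoulli
    linarith
  -- Control of all past values at once is what bounds the delayed term `p (k - h)` by `2 * p k`.
  have hdecay : 0 < p n ∧ ∀ j, p (n - j) * (1 - 2 * c) ^ j ≤ p n := by
    induction n with
    | zero =>
      refine ⟨h0, fun j => ?_⟩
      rw [Nat.zero_sub]
      exact mul_le_of_le_one_right h0.le (pow_le_one₀ hr.le (by linarith))
    | succ n ih =>
      obtain ⟨hpos, hpast⟩ := ih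
      have hdelay : p (n - h) ≤ 2 * p n := by
        by_contra! hlt
        nlinarith [hpast h]
      have hstep : p n * (1 - 2 * c) ≤ p (n + 1) := by
        linarith [hp n, mul_le_mul_of_nonneg_left hdelay hc]
      refine ⟨(mul_pos hpos hr).trans_le hstep, fun j => ?_⟩
      cases j with
      | zero => simp
      | succ j =>
        rw [Nat.succ_sub_succ, pow_succ, ← mul_assoc]
        exact (mul_le_mul_of_nonneg_right (hpast j) hr.le).trans hstep
  exact hdecay.1

lemma measureReal_biInter_compl_pos {Ω : Type*} [MeasurableSpace Ω] {μ : Measure Ω}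
    [IsFiniteMeasure μ] [NeZero μ] {A : ℕ → Set Ω} {c : ℝ} {h : ℕ} (hc : 0 ≤ c)
    (hch : c * (h + 1) ≤ 1 / 4)
    (hA : ∀ k, μ.real ((⋂ i < k - h, (A i)ᶜ) ∩ A k) ≤ c * μ.real (⋂ i < k - h, (A i)ᶜ)) (n : ℕ) :
    0 < μ.real (⋂ i < n, (A i)ᶜ) := by
  refine pos_of_sub_mul_le_succ (p := fun n => μ.real (⋂ i < n, (A i)ᶜ)) ?_ hc hch
    (fun k => ?_) n
  · simp [measureReal_univ_pos]
  · have hsub : (⋂ i < k, (A i)ᶜ) ⊆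
        (⋂ i < k + 1, (A i)ᶜ) ∪ ((⋂ i < k - h, (A i)ᶜ) ∩ A k) := by
      intro x hx
      by_cases hxk : x ∈ A k
      · have hle : k - h ≤ k := k.sub_le h
        exact Or.inr ⟨biInter_subset_biInter_left (fun i hi => lt_of_lt_of_le hi hle) hx, hxk⟩
      · exact Or.inl (by rw [biInter_lt_succ]; exact ⟨hx, hxk⟩)
    linarith [(measureReal_mono (μ := μ) hsub).trans (measureReal_union_le _ _), hA k]

section Sieve

variable {δ : ℝ} {h : ℕ} {t : ℕ → ℝ}

lemma measureReal_biInter_compl_dyadicHull_pos (hδ : 0 < δ) (hδh : δ * (h + 1) ≤ 1 / 48)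
    (hmono : Monotone t) (hgap : ∀ i, 2 / δ * t i ≤ t (i + h + 1)) (η : ℕ → ℝ) (ht : 1 ≤ t 0)
    {l : ℕ → ℕ} (hfine : ∀ i, t i ≤ δ * 2 ^ l i) (hcoarse : ∀ i, 2 ^ l i ≤ 2 / δ * t i) (n : ℕ) :
    0 < (volume.restrict (Ico 0 1)).real
      (⋂ i < n, (dyadicHull (l i) (nearInt (t i) (η i) δ))ᶜ) := by
  have hδh0 : 0 ≤ δ * h := by positivity
  have : NeZero (volume.restrict (Ico (0 : ℝ) 1)) := ⟨by simp⟩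
  refine measureReal_biInter_compl_pos (c := 12 * δ) (h := h) (by positivity) (by linarith)
    (fun k => ?_) n
  have htk : 1 ≤ t k := ht.trans (hmono k.zero_le)
  obtain ⟨L, hL, hL'⟩ := exists_nat_pow_near htk one_lt_two
  have hlevel : ∀ i < k - h, l i ≤ L := fun i hi => by
    have hpow : (2 : ℝ) ^ l i < 2 ^ (L + 1) :=
      ((hcoarse i).trans (hgap i)).trans_lt ((hmono (by lia)).trans_lt hL')
    exact Nat.lt_succ_iff.1 ((pow_lt_pow_iff_right₀ one_lt_two).1 hpow)
  have hdyadic : MeasurableSet[dyadicAlgebra L]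
      (⋂ i < k - h, (dyadicHull (l i) (nearInt (t i) (η i) δ))ᶜ) :=
    .iInter fun i => .iInter fun hi =>
      .compl (monotone_dyadicAlgebra (hlevel i hi) _ (measurableSet_dyadicHull _ _))
  calc _ ≤ (volume.restrict (Ico 0 1)).real
        ((⋂ i < k - h, (dyadicHull (l i) (nearInt (t i) (η i) δ))ᶜ) ∩
          nearInt (t k) (η k) (δ + δ)) :=
        measureReal_mono (inter_subset_inter_right _
          (dyadicHull_nearInt_subset (zero_lt_one.trans_le htk) (hfine k) _ _))
    _ ≤ _ := measureReal_restrict_Ico_inter_nearInt_le hL (by linarith) (by linarith) _ hdyadic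
    _ = _ := by ring

lemma exists_forall_le_nint_of_one_le (hδ : 0 < δ) (hδh : δ * (h + 1) ≤ 1 / 48)
    (hmono : Monotone t) (hgap : ∀ i, 2 / δ * t i ≤ t (i + h + 1)) (η : ℕ → ℝ) (ht : 1 ≤ t 0) :
    ∃ x ∈ Icc (0 : ℝ) 1, ∀ j, δ ≤ nint (x * t j - η j) := by
  have hδh0 : 0 ≤ δ * h := by positivity
  have hlevel : ∀ i, ∃ l : ℕ, t i ≤ δ * 2 ^ l ∧ 2 ^ l ≤ 2 / δ * t i := fun i => by
    have hti : 1 ≤ t i / δ := by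
      rw [one_le_div hδ]
      linarith [hmono i.zero_le]
    obtain ⟨l, hl, hl'⟩ := exists_nat_pow_near hti one_lt_two
    refine ⟨l + 1, (div_le_iff₀' hδ).1 hl'.le, ?_⟩
    calc (2 : ℝ) ^ (l + 1) = 2 * 2 ^ l := pow_succ' 2 l
      _ ≤ 2 * (t i / δ) := by gcongr
      _ = 2 / δ * t i := by ring
  choose l hfine hcoarse using hlevel
  refine exists_forall_le_nint_of_isCompact isCompact_Icc fun n => ?_
  have hpos := measureReal_biInter_compl_dyadicHull_pos hδ hδh hmono hgap η ht hfine hcoarse n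
  rw [measureReal_restrict_apply' measurableSet_Ico] at hpos
  obtain ⟨x, hx, hx01⟩ := nonempty_of_measureReal_ne_zero hpos.ne'
  exact ⟨x, Ico_subset_Icc_self hx01, fun i hi => not_lt.1 fun hnear =>
    mem_iInter₂.1 hx i hi (subset_dyadicHull _ _ hnear)⟩

theorem exists_forall_le_nint_of_gap (hδ : 0 < δ) (hδh : δ * (h + 1) ≤ 1 / 48)
    (hmono : Monotone t) (hgap : ∀ i, 2 / δ * t i ≤ t (i + h + 1)) (η : ℕ → ℝ) (ht : 0 < t 0) :
    ∃ x, ∀ j, δ ≤ nint (x * t j - η j) := by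
  obtain ⟨x, -, hx⟩ := exists_forall_le_nint_of_one_le (t := fun i => t i / t 0) hδ hδh
    (fun i j hij => div_le_div_of_nonneg_right (hmono hij) ht.le)
    (fun i => by
      rw [← mul_div_assoc]
      exact div_le_div_of_nonneg_right (hgap i) ht.le)
    η (div_self ht.ne').ge
  exact ⟨x / t 0, fun j => by simpa only [div_mul_eq_mul_div, mul_div_assoc] using hx j⟩

end Sieve

lemma pow_le_one_add_inv_pow {M : ℝ} (hM : 1 ≤ M) {n m : ℕ}
    (hm : 2 * n * (M * Real.log M) ≤ m) : M ^ n ≤ (1 + 1 / M) ^ m := by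
  have : 0 < M := by linarith
  have hlog : 1 / (2 * M) ≤ Real.log (1 + 1 / M) :=
    calc 1 / (2 * M) ≤ 1 / (M + 1) := by
          gcongr
          linarith
      _ = 1 - (1 + 1 / M)⁻¹ := by
          field_simp
          ring
      _ ≤ Real.log (1 + 1 / M) := Real.one_sub_inv_le_log_of_pos (by positivity)
  rw [← Real.log_le_log_iff (by positivity) (by positivity), Real.log_pow, Real.log_pow]
  calc (n : ℝ) * Real.log M = 2 * n * (M * Real.log M) * (1 / (2 * M)) := by field_simp
    _ ≤ m * Real.log (1 + 1 / M) := by gcongr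

lemma one_le_mul_log {M : ℝ} (hM : 2 ≤ M) : 1 ≤ M * Real.log M := by
  have hlog : 1 / 2 ≤ Real.log M := by
    linarith [Real.log_le_log two_pos hM, Real.log_two_gt_d9]
  nlinarith

lemma exists_mul_le_and_two_div_le_pow {M : ℝ} (hM : 2 ≤ M) :
    ∃ h : ℕ, 1 / 2048 / (M * Real.log M) * (h + 1) ≤ 1 / 48 ∧
      2 / (1 / 2048 / (M * Real.log M)) ≤ (1 + 1 / M) ^ (h + 1) := by
  have hX : 1 ≤ M * Real.log M := one_le_mul_log hM
  have hXM : M * Real.log M ≤ M ^ 2 := by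
    nlinarith [Real.log_le_sub_one_of_pos (show 0 < M by linarith)]
  set X := M * Real.log M
  -- `28` is `2 * 14`, where `14` is the exponent in `2 / δ = 2 ^ 12 * X ≤ M ^ 14`.
  refine ⟨⌊28 * X⌋₊, ?_, ?_⟩
  · rw [div_mul_eq_mul_div, div_le_iff₀ (by linarith)]
    linarith [Nat.floor_le (show 0 ≤ 28 * X by linarith)]
  · calc 2 / (1 / 2048 / X) = 2 ^ 12 * X := by
          field_simp
          norm_num
      _ ≤ M ^ 12 * M ^ 2 := by gcongr
      _ = M ^ 14 := by ring
      _ ≤ (1 + 1 / M) ^ (⌊28 * X⌋₊ + 1) := by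
          refine pow_le_one_add_inv_pow (by linarith) ?_
          push_cast
          linarith [Nat.lt_floor_add_one (28 * X)]

end PeresSchlag

/-- Dubickas' inhomogeneous version of the Peres–Schlag theorem. -/
theorem stmt10 : ∃ γ' : ℝ, 0 < γ' ∧ ∀ M : ℝ, 2 ≤ M → ∀ t : ℕ → ℝ,
    (∀ j, 0 < t j) → (∀ j, 1 + 1 / M ≤ t (j + 1) / t j) → ∀ η : ℕ → ℝ,
    ∃ α : ℝ, ∀ j, γ' / (M * Real.log M) ≤ nint (α * t j - η j) := by
  refine ⟨1 / 2048, by norm_num, fun M hM t hpos hratio η => ?_⟩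
  have hX : 0 < M * Real.log M := zero_lt_one.trans_le (one_le_mul_log hM)
  have hq : 1 ≤ 1 + 1 / M := le_add_of_nonneg_right (by positivity)
  have hstep : ∀ j, (1 + 1 / M) * t j ≤ t (j + 1) := fun j => (le_div_iff₀ (hpos j)).1 (hratio j)
  have hmono : Monotone t := monotone_nat_of_le_succ fun j =>
    (le_mul_of_one_le_left (hpos j).le hq).trans (hstep j)
  obtain ⟨h, hδh, hgrow⟩ := exists_mul_le_and_two_div_le_pow hM
  refine exists_forall_le_nint_of_gap (by positivity) hδh hmono (fun i => ?_) η (hpos 0)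
  calc 2 / (1 / 2048 / (M * Real.log M)) * t i ≤ (1 + 1 / M) ^ (h + 1) * t i :=
        mul_le_mul_of_nonneg_right hgrow (hpos i).le
    _ ≤ t (i + (h + 1)) :=
        geom_le (u := fun d => t (i + d)) (by positivity) (h + 1) fun d _ => hstep (i + d)
end
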